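/- Let M be a von Neumann algebra acting on a separable complex Hilbert space, equipped with a faithful normal tracial state τ, suppose M is hyperfinite (there exists an increasing sequence of finite-dimensional unital *-subalgebras whose union is strongly dense in M), and suppose M is diffuse, i.e., M contains no minimal projections. Let D be a finite-dimensional abelian unital *-subalgebra of M and let ε > 0. Then there exists an increasing sequence A_0 ⊆ A_1 ⊆ A_2 ⊆ … of finite-dimensional unital *-subalgebras of M, each containing D, whose union is strongly dense in M, and such that every minimal projection of every A_n has trace less than ε. -/

import Mathlib

open Filter Topology
open scoped InnerProductSpace

/-!
Let `B n` be an increasing sequence of finite-dimensional algebras with dense union. Choosing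
maximal abelian subalgebras of the successive relative commutants gives an increasing sequence of
maximal abelian subalgebras, spanned by partitions `S n` of `1` into minimal projections of `B n`,
and the closure of their union is the *diagonal* of `M`. Since `M` is diffuse, König's lemma makes
the traces of the projections in `S N` all smaller than `ε` for large `N`.

Finitely many orthogonal projections of `M` can be conjugated into the diagonal by one unitary `u`
of `M`: approximately inside some `B m`, and exactly as the limit of an infinite product of
unitaries converging fast to `1` in the `2`-norm. Apply this to the minimal projections of `D`. A
projection of the diagonal is a sum of products of projections in `S n` with elements commuting
with `B n`, so that `B n` and `u D u⋆` generate a finite-dimensional algebra `C n`. A minimal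
projection of `C n` is dominated in trace by some projection in `S n`, hence the algebras
`u⋆ C n u` with `n ≥ N` have the required properties.

Normality of the trace, on a separable Hilbert space, makes the unit ball of `M` complete for the
`2`-norm, and Kaplansky's density theorem turns strong density into `2`-norm density.
-/

theorem exists_seq_of_forall_exists {α : Type*} {P : ℕ → α → Prop} {R : ℕ → α → α → Prop}
    (h0 : ∃ a, P 0 a) (hR : ∀ n a, P n a → ∃ b, P (n + 1) b ∧ R n a b) :
    ∃ u : ℕ → α, (∀ n, P n (u n)) ∧ ∀ n, R n (u n) (u (n + 1)) := by
  obtain ⟨a, ha⟩ := h0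
  choose next hnext hR using hR
  let u : ∀ n, {a // P n a} := Nat.rec ⟨a, ha⟩ fun n a => ⟨next n a a.2, hnext n a a.2⟩
  exact ⟨fun n => (u n).1, fun n => (u n).2, fun n => hR n (u n).1 (u n).2⟩

section TracialState

variable {A : Type*} [CStarAlgebra A] {τ : A →ₗ[ℂ] ℂ}

/-- A faithful tracial state on a unital C⋆-algebra. -/
structure IsFaithfulTracialState (τ : A →ₗ[ℂ] ℂ) : Prop where
  map_one : τ 1 = 1
  map_mul_comm : ∀ x y, τ (x * y) = τ (y * x)
  nonneg : ∀ x, 0 ≤ (τ (star x * x)).re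
  im_eq_zero : ∀ x, (τ (star x * x)).im = 0
  eq_zero : ∀ x, τ (star x * x) = 0 → x = 0

/-- The `L²`-norm `‖x‖₂ = τ(x⋆x)^{1/2}` of a tracial state `τ`. -/
noncomputable def twoNorm (τ : A →ₗ[ℂ] ℂ) (x : A) : ℝ := √(τ (star x * x)).re

/-- The points of `A` that are `‖·‖₂`-limits of points of `s`. -/
def twoNormClosure (τ : A →ₗ[ℂ] ℂ) (s : Set A) : Set A :=
  {x | ∀ δ > 0, ∃ a ∈ s, twoNorm τ (a - x) < δ}

theorem twoNorm_nonneg (x : A) : 0 ≤ twoNorm τ x := Real.sqrt_nonneg _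

theorem twoNorm_neg (x : A) : twoNorm τ (-x) = twoNorm τ x := by simp [twoNorm]

theorem twoNorm_sub_comm (x y : A) : twoNorm τ (x - y) = twoNorm τ (y - x) := by
  rw [← twoNorm_neg, neg_sub]

theorem twoNorm_zero : twoNorm τ (0 : A) = 0 := by simp [twoNorm]

theorem twoNorm_smul (c : ℂ) (x : A) : twoNorm τ (c • x) = ‖c‖ * twoNorm τ x := by
  have h : star c * c = ((‖c‖ ^ 2 : ℝ) : ℂ) := by
    rw [Complex.star_def, Complex.conj_mul', Complex.ofReal_pow]
  rw [twoNorm, star_smul, smul_mul_smul_comm, h, map_smul, smul_eq_mul, Complex.re_ofReal_mul,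
    Real.sqrt_mul (sq_nonneg _), Real.sqrt_sq (norm_nonneg c), twoNorm]

theorem twoNorm_unitary_mul {u : A} (hu : u ∈ unitary A) (x : A) :
    twoNorm τ (u * x) = twoNorm τ x := by
  rw [twoNorm, star_mul, mul_assoc, ← mul_assoc (star u), Unitary.star_mul_self_of_mem hu,
    one_mul, twoNorm]

namespace IsFaithfulTracialState

variable (hτ : IsFaithfulTracialState τ)
include hτ

theorem map_star (x : A) : τ (star x) = star (τ x) := by
  have h1 := hτ.im_eq_zero (1 + x)
  have h2 := hτ.im_eq_zero (1 + Complex.I • x)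
  have h3 := hτ.im_eq_zero x
  have h4 := hτ.im_eq_zero (1 : A)
  simp only [star_add, star_one, add_mul, mul_add, one_mul, mul_one, map_add, star_smul,
    smul_mul_assoc, mul_smul_comm, map_smul, Complex.add_im, smul_eq_mul, RCLike.star_def,
    Complex.conj_I, neg_mul, mul_neg, Complex.neg_im, Complex.I_mul_im,
    Complex.I_mul_re] at h1 h2 h3 h4
  refine Complex.ext ?_ ?_
  · rw [RCLike.star_def, Complex.conj_re]
    linarith
  · rw [RCLike.star_def, Complex.conj_im]
    linarith

/-- The `L²` inner product `⟪x, y⟫ = τ(x⋆y)` of a faithful tracial state. -/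
@[reducible] noncomputable def innerProductCore : InnerProductSpace.Core ℂ A where
  inner x y := τ (star x * y)
  conj_inner_symm x y := by
    have := hτ.map_star (star y * x)
    simp only [star_mul, star_star] at this
    simp [this]
  re_inner_nonneg x := hτ.nonneg x
  add_left x y z := by simp [add_mul]
  smul_left x y r := by simp
  definite x := hτ.eq_zero x

theorem norm_map_star_mul_le (x y : A) : ‖τ (star x * y)‖ ≤ twoNorm τ x * twoNorm τ y :=
  letI := hτ.innerProductCore
  InnerProductSpace.Core.norm_inner_le_norm (𝕜 := ℂ) x y

theorem twoNorm_add_le (x y : A) : twoNorm τ (x + y) ≤ twoNorm τ x + twoNorm τ y :=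
  letI := hτ.innerProductCore.toCore
  letI := InnerProductSpace.Core.toSeminormedAddCommGroup (𝕜 := ℂ) (F := A)
  norm_add_le x y

theorem twoNorm_sub_le (x y z : A) :
    twoNorm τ (x - z) ≤ twoNorm τ (x - y) + twoNorm τ (y - z) := by
  simpa using hτ.twoNorm_add_le (x - y) (y - z)

theorem twoNorm_sum_le {ι : Type*} (s : Finset ι) (f : ι → A) :
    twoNorm τ (∑ i ∈ s, f i) ≤ ∑ i ∈ s, twoNorm τ (f i) :=
  Finset.le_sum_of_subadditive _ twoNorm_zero.le hτ.twoNorm_add_le s f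

theorem twoNorm_sq (x : A) : twoNorm τ x ^ 2 = (τ (star x * x)).re :=
  Real.sq_sqrt (hτ.nonneg x)

theorem twoNorm_star (x : A) : twoNorm τ (star x) = twoNorm τ x := by
  rw [twoNorm, twoNorm, star_star, hτ.map_mul_comm]

theorem twoNorm_mul_unitary {u : A} (hu : u ∈ unitary A) (x : A) :
    twoNorm τ (x * u) = twoNorm τ x := by
  rw [← hτ.twoNorm_star, star_mul, twoNorm_unitary_mul (Unitary.star_mem hu), hτ.twoNorm_star]

theorem twoNorm_one : twoNorm τ 1 = 1 := by simp [twoNorm, hτ.map_one]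

theorem twoNorm_eq_zero {x : A} (h : twoNorm τ x = 0) : x = 0 := by
  refine hτ.eq_zero x (Complex.ext ?_ (hτ.im_eq_zero x))
  rw [← hτ.twoNorm_sq, h, zero_pow two_ne_zero, Complex.zero_re]

theorem norm_map_le (x : A) : ‖τ x‖ ≤ twoNorm τ x := by
  simpa [hτ.twoNorm_one] using hτ.norm_map_star_mul_le 1 x

/-- Multiply `x⋆x ≤ ‖x‖²` by `y⋆` and `y` and apply `τ`. -/
theorem twoNorm_mul_le_left (x y : A) : twoNorm τ (x * y) ≤ ‖x‖ * twoNorm τ y := by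
  let := CStarAlgebra.spectralOrder A
  let := CStarAlgebra.spectralOrderedRing A
  obtain ⟨z, hz⟩ := CStarAlgebra.nonneg_iff_eq_star_mul_self.1
    (sub_nonneg.2 (CStarAlgebra.star_mul_le_algebraMap_norm_sq (a := x)))
  have hzy : star (z * y) * (z * y)
      = ((‖x‖ ^ 2 : ℝ) : ℂ) • (star y * y) - star (x * y) * (x * y) := by
    have : star (z * y) * (z * y) = star y * (star z * z) * y := by simp only [star_mul, mul_assoc]
    rw [this, ← hz, Algebra.algebraMap_eq_smul_one]
    simp [mul_sub, sub_mul, mul_assoc, ← Complex.coe_smul]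
  have h := hτ.nonneg (z * y)
  rw [hzy, map_sub, map_smul, smul_eq_mul, Complex.sub_re, Complex.re_ofReal_mul, ← hτ.twoNorm_sq,
    ← hτ.twoNorm_sq, ← mul_pow, sub_nonneg] at h
  exact le_of_sq_le_sq h (mul_nonneg (norm_nonneg _) (twoNorm_nonneg _))

theorem twoNorm_mul_le_right (x y : A) : twoNorm τ (x * y) ≤ twoNorm τ x * ‖y‖ := by
  rw [← hτ.twoNorm_star, star_mul, mul_comm]
  simpa [hτ.twoNorm_star] using hτ.twoNorm_mul_le_left (star y) (star x)

theorem twoNorm_mul_le_of_norm_le_one_left {x : A} (hx : ‖x‖ ≤ 1) (y : A) :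
    twoNorm τ (x * y) ≤ twoNorm τ y :=
  (hτ.twoNorm_mul_le_left x y).trans (mul_le_of_le_one_left (twoNorm_nonneg _) hx)

theorem twoNorm_mul_le_of_norm_le_one_right {y : A} (hy : ‖y‖ ≤ 1) (x : A) :
    twoNorm τ (x * y) ≤ twoNorm τ x :=
  (hτ.twoNorm_mul_le_right x y).trans (mul_le_of_le_one_right (twoNorm_nonneg _) hy)

section Projection

variable {p q : A} (hp : IsStarProjection p)
include hp

theorem twoNorm_sq_of_isStarProjection : twoNorm τ p ^ 2 = (τ p).re := by
  rw [hτ.twoNorm_sq, hp.isSelfAdjoint.star_eq, hp.isIdempotentElem.eq]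

theorem map_eq_ofReal_re_of_isStarProjection : τ p = ((τ p).re : ℂ) := by
  have h := hτ.map_star p
  rw [hp.isSelfAdjoint.star_eq] at h
  exact (Complex.conj_eq_iff_re.1 h.symm).symm

theorem re_map_nonneg : 0 ≤ (τ p).re := by
  rw [← hτ.twoNorm_sq_of_isStarProjection hp]; positivity

theorem re_map_pos (h0 : p ≠ 0) : 0 < (τ p).re := by
  refine (hτ.re_map_nonneg hp).lt_of_ne fun h => h0 (hτ.twoNorm_eq_zero ?_)
  rwa [← hτ.twoNorm_sq_of_isStarProjection hp, eq_comm, sq_eq_zero_iff] at h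

theorem map_ne_zero (h0 : p ≠ 0) : τ p ≠ 0 := fun h =>
  (hτ.re_map_pos hp h0).ne' (by rw [h, Complex.zero_re])

end Projection

theorem map_mem_twoNormClosure {s t : Set A} {f : A →ₗ[ℂ] A} {K : ℝ}
    (hf : ∀ x, twoNorm τ (f x) ≤ K * twoNorm τ x) (hst : Set.MapsTo f s t) :
    Set.MapsTo f (twoNormClosure τ s) (twoNormClosure τ t) := by
  intro x hx δ hδ
  have hK : 0 ≤ K := by simpa [hτ.twoNorm_one] using (twoNorm_nonneg _).trans (hf 1)
  obtain ⟨a, ha, hax⟩ := hx (δ / (K + 1)) (by positivity)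
  refine ⟨f a, hst ha, ?_⟩
  calc twoNorm τ (f a - f x) = twoNorm τ (f (a - x)) := by rw [map_sub]
    _ ≤ (K + 1) * twoNorm τ (a - x) :=
      (hf _).trans (mul_le_mul_of_nonneg_right (by linarith) (twoNorm_nonneg _))
    _ < δ := by rwa [← lt_div_iff₀' (by positivity)]

theorem eq_zero_of_mem_twoNormClosure {s : Set A} {f : A →ₗ[ℂ] A} {K : ℝ}
    (hf : ∀ x, twoNorm τ (f x) ≤ K * twoNorm τ x) (hs : ∀ a ∈ s, f a = 0) {x : A}
    (hx : x ∈ twoNormClosure τ s) : f x = 0 := by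
  refine hτ.twoNorm_eq_zero (le_antisymm (le_of_forall_pos_lt_add fun δ hδ => ?_)
    (twoNorm_nonneg _))
  obtain ⟨_, rfl, h⟩ := hτ.map_mem_twoNormClosure hf (t := {0}) hs hx δ hδ
  rwa [zero_sub, twoNorm_neg, ← zero_add δ] at h

theorem commute_of_mem_twoNormClosure {s : Set A} {x y : A} (hs : ∀ a ∈ s, Commute y a)
    (hx : x ∈ twoNormClosure τ s) : Commute y x := by
  refine sub_eq_zero.1 (hτ.eq_zero_of_mem_twoNormClosure (K := ‖y‖ + ‖y‖)
    (f := LinearMap.mulLeft ℂ y - LinearMap.mulRight ℂ y) (fun z => ?_) (fun a ha => ?_) hx)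
  · calc twoNorm τ (y * z - z * y) ≤ twoNorm τ (y * z) + twoNorm τ (z * y) := by
          simpa [sub_eq_add_neg, twoNorm_neg] using hτ.twoNorm_add_le (y * z) (-(z * y))
      _ ≤ (‖y‖ + ‖y‖) * twoNorm τ z := by
          linarith [hτ.twoNorm_mul_le_left y z, hτ.twoNorm_mul_le_right z y]
  · exact sub_eq_zero.2 (hs a ha).eq

end IsFaithfulTracialState
end TracialState

section FiniteDimensional

variable {A : Type*} [CStarAlgebra A] {B : StarSubalgebra ℂ A} [FiniteDimensional ℂ B]

theorem isClosed_of_finiteDimensional_starSubalgebra (B : StarSubalgebra ℂ A)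
    [FiniteDimensional ℂ B] : IsClosed (B : Set A) :=
  have : FiniteDimensional ℂ B.toSubalgebra.toSubmodule := ‹FiniteDimensional ℂ B›
  Submodule.closed_of_finiteDimensional B.toSubalgebra.toSubmodule

theorem finiteDimensional_of_le_starSubalgebra {C : StarSubalgebra ℂ A} (h : C ≤ B) :
    FiniteDimensional ℂ C :=
  have : FiniteDimensional ℂ B.toSubalgebra.toSubmodule := ‹FiniteDimensional ℂ B›
  Submodule.finiteDimensional_of_le (S₁ := C.toSubalgebra.toSubmodule)
    (S₂ := B.toSubalgebra.toSubmodule) h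

theorem cfc_mem_of_finiteDimensional (f : ℝ → ℝ) {a : A} (ha : a ∈ B) : cfc f a ∈ B :=
  have := isClosed_of_finiteDimensional_starSubalgebra B
  cfc_mem (𝕜' := ℂ) f ha

theorem finite_spectrum_of_mem_finiteDimensional {a : A} (ha : a ∈ B) :
    (spectrum ℂ a).Finite := by
  nontriviality A
  obtain ⟨p, hp, hpa⟩ := IsIntegral.of_finite ℂ (⟨a, ha⟩ : B)
  have h0 : Polynomial.aeval a p = 0 := by
    rw [← Polynomial.aeval_def] at hpa
    exact (Polynomial.aeval_algHom_apply B.toSubalgebra.val (⟨a, ha⟩ : B) p).trans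
      ((congrArg B.subtype hpa).trans (map_zero _))
  refine (p.roots.toFinset.finite_toSet).subset fun k hk => ?_
  have h1 := spectrum.subset_polynomial_aeval a p ⟨k, hk, rfl⟩
  rw [h0, spectrum.zero_eq] at h1
  simpa [hp.ne_zero] using h1

theorem finite_real_spectrum_of_mem_finiteDimensional {a : A} (ha : a ∈ B) :
    (spectrum ℝ a).Finite := by
  rw [← spectrum.preimage_algebraMap ℂ]
  exact (finite_spectrum_of_mem_finiteDimensional ha).preimage
    (FaithfulSMul.algebraMap_injective ℝ ℂ).injOn

theorem continuousOn_real_spectrum_of_mem_finiteDimensional {a : A} (ha : a ∈ B) (f : ℝ → ℝ) :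
    ContinuousOn f (spectrum ℝ a) :=
  (finite_real_spectrum_of_mem_finiteDimensional ha).continuousOn f

theorem realPart_mem {S : StarSubalgebra ℂ A} {x : A} (hx : x ∈ S) : (realPart x : A) ∈ S := by
  rw [realPart_apply_coe, ← Complex.coe_smul]
  exact S.smul_mem (add_mem hx (star_mem hx)) _

theorem imaginaryPart_mem {S : StarSubalgebra ℂ A} {x : A} (hx : x ∈ S) :
    (imaginaryPart x : A) ∈ S := by
  rw [imaginaryPart_apply_coe, ← Complex.coe_smul]
  exact S.smul_mem (S.smul_mem (sub_mem hx (star_mem hx)) _) _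

theorem isStarProjection_cfc {a : A} {f : ℝ → ℝ} (hf : ContinuousOn f (spectrum ℝ a))
    (h : ∀ t ∈ spectrum ℝ a, f t * f t = f t) : IsStarProjection (cfc f a) where
  isIdempotentElem := by
    rw [IsIdempotentElem, ← cfc_mul f f a hf hf]
    exact cfc_congr h
  isSelfAdjoint := cfc_predicate f a

theorem mul_cfc {a : A} (ha : IsSelfAdjoint a) {f : ℝ → ℝ} (hf : ContinuousOn f (spectrum ℝ a)) :
    a * cfc f a = cfc (fun t => t * f t) a := by
  rw [cfc_mul (fun t => t) f a continuousOn_id hf, cfc_id' ℝ a]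

theorem exists_spectralProjection {a : A} (haB : a ∈ B) (ha : IsSelfAdjoint a) {l : ℝ}
    (hl : l ∈ spectrum ℝ a) (hl0 : l ≠ 0) :
    ∃ f ∈ B, IsStarProjection f ∧ f ≠ 0 ∧ a * f = l • f ∧ ∃ y, a * y = f := by
  have hcont := continuousOn_real_spectrum_of_mem_finiteDimensional haB
  let χ : ℝ → ℝ := fun t => if t = l then 1 else 0
  refine ⟨cfc χ a, cfc_mem_of_finiteDimensional χ haB,
    isStarProjection_cfc (hcont χ) fun t _ => by simp [χ], fun h => ?_, ?_,
    cfc (fun t => l⁻¹ * χ t) a, ?_⟩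
  · have := cfc_eq_cfc_iff_eqOn (a := a) (ha := ha) (hf := hcont χ) |>.1
      (h.trans (cfc_zero ℝ a).symm) hl
    simp [χ] at this
  · rw [mul_cfc ha (hcont _), ← cfc_smul l χ a (hcont _)]
    exact cfc_congr fun t _ => by by_cases h : t = l <;> simp [χ, h]
  · rw [mul_cfc ha (hcont _)]
    exact cfc_congr fun t _ => by by_cases h : t = l <;> simp [χ, h, hl0]

end FiniteDimensional

section MinimalProjection

variable {A : Type*} [CStarAlgebra A] {B : StarSubalgebra ℂ A} {τ : A →ₗ[ℂ] ℂ}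

/-- A minimal projection of a ⋆-subalgebra. -/
structure IsMinimalProjection (B : StarSubalgebra ℂ A) (e : A) : Prop where
  mem : e ∈ B
  isStarProjection : IsStarProjection e
  ne_zero : e ≠ 0
  exists_eq_smul : ∀ x ∈ B, ∃ c : ℂ, e * x * e = c • e

/-- A finite partition of the element `e` into minimal projections of `B`; for `e = 1` it spans
a maximal abelian ⋆-subalgebra of a finite-dimensional `B`. -/
structure IsMinimalPartition (B : StarSubalgebra ℂ A) (e : A) (S : Finset A) : Prop where
  minimal : ∀ f ∈ S, IsMinimalProjection B f
  orth : ∀ f ∈ S, ∀ g ∈ S, f ≠ g → f * g = 0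
  sum_eq : ∑ f ∈ S, f = e

theorem mul_eq_of_star_mul_eq {e f : A} (he : IsSelfAdjoint e) (hf : IsSelfAdjoint f)
    (h : e * f = f) : f * e = f := by
  simpa [he.star_eq, hf.star_eq] using congrArg star h

theorem exists_selfAdjoint_corner_ne_smul {e : A} (heB : e ∈ B) (he : IsStarProjection e)
    (h0 : e ≠ 0) (hmin : ¬ IsMinimalProjection B e) :
    ∃ x ∈ B, IsSelfAdjoint x ∧ e * x = x ∧ ∀ c : ℂ, x ≠ c • e := by
  obtain ⟨x, hxB, hx, hne⟩ : ∃ x ∈ B, IsSelfAdjoint x ∧ ∀ c : ℂ, e * x * e ≠ c • e := by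
    by_contra! hcon
    refine hmin ⟨heB, he, h0, fun x hx => ?_⟩
    obtain ⟨c, hc⟩ := hcon _ (realPart_mem hx) (realPart x).2
    obtain ⟨d, hd⟩ := hcon _ (imaginaryPart_mem hx) (imaginaryPart x).2
    refine ⟨c + Complex.I * d, ?_⟩
    rw [← realPart_add_I_smul_imaginaryPart x, mul_add, add_mul, mul_smul_comm, smul_mul_assoc,
      hc, hd, smul_smul, add_smul]
  refine ⟨e * x * e, mul_mem (mul_mem heB hxB) heB, ?_, ?_, hne⟩
  · simpa [he.isSelfAdjoint.star_eq] using hx.conjugate e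
  · rw [← mul_assoc, ← mul_assoc, he.isIdempotentElem.eq]

/-- Take the spectral projection at a nonzero spectral value of a self-adjoint `x ∈ eBe ∖ ℂe`. -/
theorem exists_proper_subprojection [FiniteDimensional ℂ B] {e : A} (heB : e ∈ B)
    (he : IsStarProjection e) (h0 : e ≠ 0) (hmin : ¬ IsMinimalProjection B e) :
    ∃ f ∈ B, IsStarProjection f ∧ e * f = f ∧ f ≠ 0 ∧ f ≠ e := by
  obtain ⟨x, hxB, hx, hex, hne⟩ := exists_selfAdjoint_corner_ne_smul heB he h0 hmin
  obtain ⟨l, hl, hl0⟩ : ∃ l ∈ spectrum ℝ x, l ≠ 0 := by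
    by_contra! h
    refine hne 0 ?_
    rw [zero_smul, ← cfc_id' ℝ x, ← cfc_zero ℝ x]
    exact cfc_congr fun t ht => h t ht
  obtain ⟨f, hfB, hf, hf0, hxf, y, hy⟩ := exists_spectralProjection hxB hx hl hl0
  refine ⟨f, hfB, hf, by rw [← hy, ← mul_assoc, hex], hf0, ?_⟩
  rintro rfl
  refine hne l ?_
  rw [Complex.coe_smul, ← hxf, mul_eq_of_star_mul_eq hf.isSelfAdjoint hx hex]

namespace IsMinimalPartition

variable {e f : A} {R S : Finset A}

theorem mul_eq (h : IsMinimalPartition B e R) (hf : f ∈ R) : e * f = f := by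
  rw [← h.sum_eq, Finset.sum_mul, Finset.sum_eq_single_of_mem f hf]
  · exact (h.minimal f hf).isStarProjection.isIdempotentElem
  · exact fun g hg hgf => h.orth g hg f hf hgf

theorem mul_eq' (h : IsMinimalPartition B e R) (hf : f ∈ R) : f * e = f := by
  rw [← h.sum_eq, Finset.mul_sum, Finset.sum_eq_single_of_mem f hf]
  · exact (h.minimal f hf).isStarProjection.isIdempotentElem
  · exact fun g hg hgf => h.orth f hf g hg hgf.symm

theorem union [DecidableEq A] (hR : IsMinimalPartition B e R) (hS : IsMinimalPartition B f S)
    (hef : e * f = 0) (hfe : f * e = 0) : IsMinimalPartition B (e + f) (R ∪ S) := by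
  have hRS : ∀ x ∈ R, ∀ y ∈ S, x * y = 0 := fun x hx y hy => by
    rw [← hR.mul_eq' hx, ← hS.mul_eq hy, mul_assoc, ← mul_assoc e, hef, zero_mul, mul_zero]
  have hSR : ∀ x ∈ R, ∀ y ∈ S, y * x = 0 := fun x hx y hy => by
    rw [← hR.mul_eq hx, ← hS.mul_eq' hy, mul_assoc, ← mul_assoc f, hfe, zero_mul, mul_zero]
  refine ⟨fun x hx => ?_, fun x hx y hy hxy => ?_, ?_⟩
  · exact (Finset.mem_union.1 hx).elim (hR.minimal x) (hS.minimal x)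
  · rcases Finset.mem_union.1 hx with h | h <;> rcases Finset.mem_union.1 hy with h' | h'
    exacts [hR.orth x h y h' hxy, hRS x h y h', hSR y h' x h, hS.orth x h y h' hxy]
  · rw [Finset.sum_union, hR.sum_eq, hS.sum_eq]
    refine Finset.disjoint_left.2 fun x hx hx' => (hR.minimal x hx).ne_zero ?_
    rw [← (hR.minimal x hx).isStarProjection.isIdempotentElem.eq, hRS x hx x hx']

end IsMinimalPartition

theorem finrank_corner_lt [FiniteDimensional ℂ B] {e f : A} (he : IsStarProjection e)
    (hfB : f ∈ B) (hf : IsStarProjection f) (hef : e * f = f) (hne : f ≠ e) :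
    Module.finrank ℂ (B.toSubalgebra.toSubmodule.map (LinearMap.mulLeft ℂ f)) <
      Module.finrank ℂ (B.toSubalgebra.toSubmodule.map (LinearMap.mulLeft ℂ e)) := by
  have : FiniteDimensional ℂ B.toSubalgebra.toSubmodule := ‹FiniteDimensional ℂ B›
  refine Submodule.finrank_lt_finrank_of_lt (lt_of_le_of_ne ?_ fun heq => hne ?_)
  · rintro _ ⟨x, hx, rfl⟩
    exact ⟨f * x, B.mul_mem hfB hx, by simp [← mul_assoc, hef]⟩
  · have he_mem : e ∈ B.toSubalgebra.toSubmodule.map (LinearMap.mulLeft ℂ e) :=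
      ⟨1, one_mem B, by simp⟩
    obtain ⟨x, -, hx⟩ := heq ▸ he_mem
    have hfe : f * e = e := by rw [← hx]; simp [← mul_assoc, hf.isIdempotentElem.eq]
    rw [← hfe, mul_eq_of_star_mul_eq he.isSelfAdjoint hf.isSelfAdjoint hef]

theorem exists_isMinimalPartition [FiniteDimensional ℂ B] {e : A} (heB : e ∈ B)
    (he : IsStarProjection e) : ∃ S, IsMinimalPartition B e S := by
  classical
  induction hn : Module.finrank ℂ (B.toSubalgebra.toSubmodule.map (LinearMap.mulLeft ℂ e))
    using Nat.strong_induction_on generalizing e with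
  | _ n ih =>
  subst hn
  by_cases h0 : e = 0
  · exact ⟨∅, by simp, by simp, by simp [h0]⟩
  by_cases hmin : IsMinimalProjection B e
  · exact ⟨{e}, by simpa, by simp +contextual, by simp⟩
  obtain ⟨f, hfB, hf, hef, hf0, hne⟩ := exists_proper_subprojection heB he h0 hmin
  have hfe := mul_eq_of_star_mul_eq he.isSelfAdjoint hf.isSelfAdjoint hef
  have hee := he.isIdempotentElem.eq
  have hff := hf.isIdempotentElem.eq
  have hg := hf.sub_of_mul_eq_right he hef
  obtain ⟨R, hR⟩ := ih _ (finrank_corner_lt he hfB hf hef hne) hfB hf rfl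
  obtain ⟨S, hS⟩ := ih _ (finrank_corner_lt he (sub_mem heB hfB) hg (by rw [mul_sub, hee, hef])
    (by simpa using hf0)) (sub_mem heB hfB) hg rfl
  refine ⟨R ∪ S, ?_⟩
  simpa using hR.union hS (by rw [mul_sub, hff, hfe, sub_self])
    (by rw [sub_mul, hff, hef, sub_self])

/-- If `ghg = c g`, then `|c| τ(g) = |τ(hgh)| ≤ ‖h‖₂ ‖hgh‖₂ = ‖h‖₂ |c| ‖g‖₂`. -/
theorem IsFaithfulTracialState.re_map_le_of_mul_ne_zero (hτ : IsFaithfulTracialState τ) {g h : A}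
    (hg : IsMinimalProjection B g) (hhB : h ∈ B) (hh : IsStarProjection h) (h0 : h * g ≠ 0) :
    (τ g).re ≤ (τ h).re := by
  have hgg := hg.isStarProjection.isIdempotentElem.eq
  have hhh := hh.isIdempotentElem.eq
  have hgs := hg.isStarProjection.isSelfAdjoint.star_eq
  have hhs := hh.isSelfAdjoint.star_eq
  obtain ⟨c, hc⟩ := hg.exists_eq_smul h hhB
  have hc0 : c ≠ 0 := by
    rintro rfl
    refine h0 (hτ.eq_zero _ ?_)
    rw [star_mul, hgs, hhs, mul_assoc, ← mul_assoc h, hhh, ← mul_assoc, hc, zero_smul, map_zero]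
  have hmap : τ (star h * (h * g * h)) = c * τ g := by
    calc τ (star h * (h * g * h)) = τ (h * g) := by
          rw [hhs, hτ.map_mul_comm, mul_assoc, hhh, hτ.map_mul_comm, ← mul_assoc, hhh]
      _ = τ (g * h * g) := by rw [hτ.map_mul_comm (g * h), ← mul_assoc, hgg, hτ.map_mul_comm]
      _ = c * τ g := by rw [hc, map_smul, smul_eq_mul]
  have hnorm : twoNorm τ (h * g * h) = ‖c‖ * twoNorm τ g := by
    have : τ (star (h * g * h) * (h * g * h)) = τ (star (g * h * g) * (g * h * g)) := by
      have h1 : star (h * g * h) * (h * g * h) = h * (g * h * g * h) := by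
        simp only [star_mul, hgs, hhs, mul_assoc, mul_assoc, ← mul_assoc h h, hhh]
      have h2 : star (g * h * g) * (g * h * g) = g * h * g * h * g := by
        simp only [star_mul, hgs, hhs, mul_assoc, ← mul_assoc g g, hgg]
      rw [h1, h2, hτ.map_mul_comm h, hτ.map_mul_comm _ g]
      simp only [mul_assoc, hhh, ← mul_assoc g g, hgg]
    rw [← twoNorm_smul, ← hc, twoNorm, this, twoNorm]
  have hle := hτ.norm_map_star_mul_le h (h * g * h)
  have hgpos : 0 < twoNorm τ g :=
    (twoNorm_nonneg g).lt_of_ne fun h => hg.ne_zero (hτ.twoNorm_eq_zero h.symm)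
  rw [hmap, hnorm, norm_mul, hτ.map_eq_ofReal_re_of_isStarProjection hg.isStarProjection,
    Complex.norm_real, ← hτ.twoNorm_sq_of_isStarProjection hg.isStarProjection,
    Real.norm_of_nonneg (sq_nonneg _), mul_left_comm, mul_le_mul_iff_right₀ (norm_pos_iff.2 hc0),
    sq, mul_le_mul_iff_left₀ hgpos] at hle
  rw [← hτ.twoNorm_sq_of_isStarProjection hg.isStarProjection,
    ← hτ.twoNorm_sq_of_isStarProjection hh]
  gcongr

end MinimalProjection

section Averaging

variable {A : Type*} [CStarAlgebra A] {τ : A →ₗ[ℂ] ℂ} {B : StarSubalgebra ℂ A}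
  {ι : Type*} [Fintype ι] {b : ι → A}

theorem mem_centralizer_iff_commute {x : A} :
    x ∈ StarSubalgebra.centralizer ℂ (B : Set A) ↔ ∀ a ∈ B, Commute a x :=
  StarSubalgebra.mem_centralizer_iff ℂ |>.trans
    ⟨fun h a ha => (h a ha).1, fun h a ha => ⟨h a ha, h _ (star_mem ha)⟩⟩

/-- A family in `B` with the reconstruction property `x = ∑ₖ τ(bₖ⋆x) bₖ` of an orthonormal
basis of `B` for the inner product `τ(x⋆y)`. -/
structure IsTraceBasis (τ : A →ₗ[ℂ] ℂ) (B : StarSubalgebra ℂ A) (b : ι → A) : Prop where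
  mem : ∀ k, b k ∈ B
  sum_eq : ∀ x ∈ B, ∑ k, τ (star (b k) * x) • b k = x

/-- The averaging `x ↦ ∑ₖ bₖ x bₖ⋆` over a trace basis of `B`, which maps into the commutant
of `B`. -/
noncomputable def averaging (b : ι → A) : A →ₗ[ℂ] A :=
  ∑ k, LinearMap.mulLeftRight ℂ (b k, star (b k))

/-- For a minimal projection `e` of `B`, the map `τ(e) ∑ₖ bₖ x bₖ⋆` inverts the isomorphism
`z ↦ ze` from (the part under the central support of `e` of) the commutant of `B` onto its
corner at `e`. -/
noncomputable def cornerLift (τ : A →ₗ[ℂ] ℂ) (b : ι → A) (e : A) : A →ₗ[ℂ] A :=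
  τ e • averaging b

theorem exists_sum_inner_smul_eq {E : Type*} [AddCommGroup E] [Module ℂ E] [FiniteDimensional ℂ E]
    (c : InnerProductSpace.Core ℂ E) :
    ∃ (n : ℕ) (b : Fin n → E), ∀ x, ∑ k, c.inner (b k) x • b k = x := by
  let := InnerProductSpace.Core.toNormedAddCommGroup (cd := c)
  let := InnerProductSpace.ofCore c.toCore
  exact ⟨_, _, (stdOrthonormalBasis ℂ E).sum_repr'⟩

theorem IsFaithfulTracialState.exists_isTraceBasis (hτ : IsFaithfulTracialState τ)
    (B : StarSubalgebra ℂ A) [FiniteDimensional ℂ B] :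
    ∃ (n : ℕ) (b : Fin n → A), IsTraceBasis τ B b := by
  let c : InnerProductSpace.Core ℂ B :=
    { inner x y := hτ.innerProductCore.inner (x : A) y
      conj_inner_symm x y := hτ.innerProductCore.conj_inner_symm x y
      re_inner_nonneg x := hτ.innerProductCore.re_inner_nonneg x
      add_left x y z := hτ.innerProductCore.add_left x y z
      smul_left x y r := hτ.innerProductCore.smul_left x y r
      definite x hx := Subtype.ext (hτ.innerProductCore.definite x hx) }
  obtain ⟨n, b, hb⟩ := exists_sum_inner_smul_eq c
  refine ⟨n, fun k => b k, fun k => (b k).2, fun x hx => ?_⟩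
  simpa using! congrArg B.subtype (hb ⟨x, hx⟩)

theorem averaging_apply (b : ι → A) (x : A) : averaging b x = ∑ k, b k * x * star (b k) := by
  simp [averaging]

theorem IsFaithfulTracialState.twoNorm_averaging_le (hτ : IsFaithfulTracialState τ) (b : ι → A)
    (x : A) :
    twoNorm τ (averaging b x) ≤ (∑ k, ‖b k‖ * ‖star (b k)‖) * twoNorm τ x := by
  rw [averaging_apply, Finset.sum_mul]
  refine (hτ.twoNorm_sum_le _ _).trans (Finset.sum_le_sum fun k _ => ?_)
  calc twoNorm τ (b k * x * star (b k)) ≤ ‖b k‖ * twoNorm τ x * ‖star (b k)‖ :=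
        (hτ.twoNorm_mul_le_right _ _).trans
          (mul_le_mul_of_nonneg_right (hτ.twoNorm_mul_le_left _ _) (norm_nonneg _))
    _ = ‖b k‖ * ‖star (b k)‖ * twoNorm τ x := by ring

theorem star_averaging (b : ι → A) (x : A) : star (averaging b x) = averaging b (star x) := by
  simp [averaging_apply, mul_assoc]

theorem star_cornerLift {e x : A} (he : star (τ e) = τ e) :
    star (cornerLift τ b e x) = cornerLift τ b e (star x) := by
  simp only [cornerLift, LinearMap.smul_apply, star_smul, he, star_averaging]

namespace IsTraceBasis

variable (hb : IsTraceBasis τ B b)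
include hb

theorem averaging_mem {C : StarSubalgebra ℂ A} (hBC : B ≤ C) {x : A} (hx : x ∈ C) :
    averaging b x ∈ C := by
  rw [averaging_apply]
  exact sum_mem fun k _ => mul_mem (mul_mem (hBC (hb.mem k)) hx) (star_mem (hBC (hb.mem k)))

theorem averaging_mul {z : A} (hz : z ∈ StarSubalgebra.centralizer ℂ (B : Set A)) (x : A) :
    averaging b (x * z) = averaging b x * z := by
  simp only [averaging_apply, Finset.sum_mul]
  refine Finset.sum_congr rfl fun k _ => ?_
  rw [mul_assoc _ _ z, (mem_centralizer_iff_commute.1 hz _ (star_mem (hb.mem k))).eq, mul_assoc,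
    mul_assoc, mul_assoc]

theorem averaging_mem_centralizer (hτ : IsFaithfulTracialState τ) (x : A) :
    averaging b x ∈ StarSubalgebra.centralizer ℂ (B : Set A) := by
  refine mem_centralizer_iff_commute.2 fun y hy => ?_
  have hleft : ∀ k, y * b k = ∑ j, τ (star (b j) * (y * b k)) • b j := fun k =>
    (hb.sum_eq _ (mul_mem hy (hb.mem k))).symm
  have hright : ∀ j, star (b j) * y = ∑ k, τ (star (b j) * (y * b k)) • star (b k) := fun j => by
    have h := congrArg star (hb.sum_eq _ (mul_mem (star_mem hy) (hb.mem j)))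
    simp only [star_sum, star_smul, ← hτ.map_star, star_mul, star_star, mul_assoc] at h
    exact h.symm
  calc y * averaging b x = ∑ k, ∑ j, τ (star (b j) * (y * b k)) • (b j * x * star (b k)) := by
        simp only [averaging_apply, Finset.mul_sum, ← mul_assoc]
        refine Finset.sum_congr rfl fun k _ => ?_
        rw [hleft k, Finset.sum_mul, Finset.sum_mul]
        simp only [smul_mul_assoc, mul_assoc]
    _ = averaging b x * y := by
        simp only [averaging_apply, Finset.sum_mul, mul_assoc _ _ y]
        rw [Finset.sum_comm]
        refine Finset.sum_congr rfl fun j _ => ?_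
        rw [hright j, Finset.mul_sum]
        simp only [mul_smul_comm, mul_assoc]

section Corner

variable {e x : A}

theorem cornerLift_mem {C : StarSubalgebra ℂ A} (hBC : B ≤ C) (hx : x ∈ C) :
    cornerLift τ b e x ∈ C :=
  C.smul_mem (hb.averaging_mem hBC hx) _

variable (hτ : IsFaithfulTracialState τ)
include hτ

theorem cornerLift_mem_centralizer :
    cornerLift τ b e x ∈ StarSubalgebra.centralizer ℂ (B : Set A) :=
  SMulMemClass.smul_mem _ (hb.averaging_mem_centralizer hτ x)

variable (he : IsMinimalProjection B e)
include he

/-- Minimality gives `e bₖ⋆ e = τ(e)⁻¹ τ(bₖ⋆e) e`, so the sum collapses to the reconstruction of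
`e`. -/
theorem cornerLift_mul (hex : e * x = x) (hxe : x * e = x) : cornerLift τ b e x * e = x := by
  have hee := he.isStarProjection.isIdempotentElem.eq
  have hcompress : ∀ k, τ e • (e * star (b k) * e) = τ (star (b k) * e) • e := fun k => by
    obtain ⟨c, hc⟩ := he.exists_eq_smul _ (star_mem (hb.mem k))
    have : τ (star (b k) * e) = c * τ e := by
      rw [← smul_eq_mul c, ← map_smul, ← hc, hτ.map_mul_comm (e * _), ← mul_assoc, hee,
        hτ.map_mul_comm]
    rw [hc, this, smul_smul, mul_comm]
  have hterm : ∀ k, τ e • (b k * x * star (b k) * e) = τ (star (b k) * e) • b k * x := fun k => by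
    calc τ e • (b k * x * star (b k) * e) = b k * x * (τ e • (e * star (b k) * e)) := by
          rw [mul_smul_comm, mul_assoc e, ← mul_assoc _ e, mul_assoc _ x e, hxe]
          simp only [mul_assoc]
      _ = τ (star (b k) * e) • b k * x := by
          rw [hcompress, mul_smul_comm, mul_assoc, hxe, smul_mul_assoc]
  rw [cornerLift, LinearMap.smul_apply, averaging_apply, smul_mul_assoc, Finset.sum_mul,
    Finset.smul_sum, Finset.sum_congr rfl fun k _ => hterm k, ← Finset.sum_mul,
    hb.sum_eq e he.mem, hex]

theorem cornerLift_mul_cornerLift {y : A} (hxe : x * e = x) (hey : e * y = y)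
    (hye : y * e = y) : cornerLift τ b e x * cornerLift τ b e y = cornerLift τ b e (x * y) := by
  have hz : cornerLift τ b e y ∈ StarSubalgebra.centralizer ℂ (B : Set A) :=
    hb.cornerLift_mem_centralizer hτ
  have hxz : x * cornerLift τ b e y = x * y := by
    rw [← hxe, mul_assoc, (mem_centralizer_iff_commute.1 hz e he.mem).eq,
      hb.cornerLift_mul hτ he hey hye, hxe]
  calc cornerLift τ b e x * cornerLift τ b e y = τ e • averaging b (x * cornerLift τ b e y) := by
        rw [hb.averaging_mul hz, ← smul_mul_assoc]; rfl
    _ = cornerLift τ b e (x * y) := by rw [hxz]; rfl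

end Corner
end IsTraceBasis
end Averaging

section DiagonalTower

variable {A : Type*} [CStarAlgebra A] {τ : A →ₗ[ℂ] ℂ} {B C : StarSubalgebra ℂ A}

namespace IsMinimalPartition

variable {S T : Finset A}

theorem span_le {e : A} (hS : IsMinimalPartition B e S) :
    Submodule.span ℂ (S : Set A) ≤ B.toSubalgebra.toSubmodule :=
  Submodule.span_le.2 fun f hf => (hS.minimal f hf).mem

theorem one_mem_span (hS : IsMinimalPartition B 1 S) : 1 ∈ Submodule.span ℂ (S : Set A) :=
  hS.sum_eq ▸ sum_mem fun _ hf => Submodule.subset_span hf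

theorem mul_mem_span {e x y : A} (hS : IsMinimalPartition B e S)
    (hx : x ∈ Submodule.span ℂ (S : Set A)) (hy : y ∈ Submodule.span ℂ (S : Set A)) :
    x * y ∈ Submodule.span ℂ (S : Set A) := by
  refine Submodule.span_induction₂ (p := fun x y _ _ => x * y ∈ Submodule.span ℂ (S : Set A))
    (fun f g hf hg => ?_) (fun y _ => by simp) (fun x _ => by simp)
    (fun _ _ _ _ _ _ h h' => by simpa only [add_mul] using add_mem h h')
    (fun _ _ _ _ _ _ h h' => by simpa only [mul_add] using add_mem h h')
    (fun c _ _ _ _ h => by simpa only [smul_mul_assoc] using Submodule.smul_mem _ c h)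
    (fun c _ _ _ _ h => by simpa only [mul_smul_comm] using Submodule.smul_mem _ c h) hx hy
  by_cases h : f = g
  · rw [← h, (hS.minimal f hf).isStarProjection.isIdempotentElem.eq]
    exact Submodule.subset_span hf
  · simp [hS.orth f hf g hg h]

theorem commute_of_mem_span {e x y : A} (hS : IsMinimalPartition B e S)
    (hx : x ∈ Submodule.span ℂ (S : Set A)) (hy : y ∈ Submodule.span ℂ (S : Set A)) :
    Commute x y := by
  refine Submodule.span_induction₂ (p := fun x y _ _ => Commute x y) (fun f g hf hg => ?_)
    (fun y _ => .zero_left y) (fun x _ => .zero_right x) (fun _ _ _ _ _ _ => .add_left)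
    (fun _ _ _ _ _ _ => .add_right) (fun c _ _ _ _ h => h.smul_left c)
    (fun c _ _ _ _ h => h.smul_right c) hx hy
  by_cases h : f = g
  · exact h ▸ Commute.refl f
  · exact (hS.orth f hf g hg h).trans (hS.orth g hg f hf (Ne.symm h)).symm

theorem exists_mul_eq_smul {e x f : A} (hS : IsMinimalPartition B e S)
    (hx : x ∈ Submodule.span ℂ (S : Set A)) (hf : f ∈ S) : ∃ c : ℂ, x * f = c • f := by
  have hff := (hS.minimal f hf).isStarProjection.isIdempotentElem.eq
  obtain ⟨c, hc⟩ := (hS.minimal f hf).exists_eq_smul x (hS.span_le hx)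
  exact ⟨c, by rw [← hc, ((hS.commute_of_mem_span hx (Submodule.subset_span hf)).eq).symm,
    mul_assoc, hff]⟩

end IsMinimalPartition

theorem IsFaithfulTracialState.isMinimalProjection_mul [FiniteDimensional ℂ B]
    (hτ : IsFaithfulTracialState τ) (hBC : B ≤ C) {e t : A} (he : IsMinimalProjection B e)
    (ht : IsMinimalProjection (C ⊓ StarSubalgebra.centralizer ℂ (B : Set A)) t) (h0 : e * t ≠ 0) :
    IsMinimalProjection C (e * t) := by
  obtain ⟨_, b, hb⟩ := hτ.exists_isTraceBasis B
  have hee := he.isStarProjection.isIdempotentElem.eq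
  have het := (mem_centralizer_iff_commute.1 ht.mem.2 e he.mem).eq
  refine ⟨mul_mem (hBC he.mem) ht.mem.1, he.isStarProjection.mul ht.isStarProjection het, h0,
    fun x hx => ?_⟩
  set z := cornerLift τ b e (e * x * e)
  have hze : z * e = e * x * e :=
    hb.cornerLift_mul hτ he (by simp only [← mul_assoc, hee]) (by simp only [mul_assoc, hee])
  have hzC : z ∈ C := hb.cornerLift_mem hBC (mul_mem (mul_mem (hBC he.mem) hx) (hBC he.mem))
  obtain ⟨c, hc⟩ := ht.exists_eq_smul z ⟨hzC, hb.cornerLift_mem_centralizer hτ⟩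
  refine ⟨c, ?_⟩
  calc e * t * x * (e * t) = t * (e * x * e) * t := by simp only [het, mul_assoc]
    _ = t * z * t * e := by rw [← hze, mul_assoc, mul_assoc _ e, het]; simp only [mul_assoc]
    _ = c • (e * t) := by rw [hc, smul_mul_assoc, het]

theorem IsFaithfulTracialState.isMinimalPartition_mul [FiniteDimensional ℂ B] [DecidableEq A]
    (hτ : IsFaithfulTracialState τ) (hBC : B ≤ C) {S T : Finset A}
    (hS : IsMinimalPartition B 1 S)
    (hT : IsMinimalPartition (C ⊓ StarSubalgebra.centralizer ℂ (B : Set A)) 1 T) :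
    IsMinimalPartition C 1 (((S ×ˢ T).image fun x => x.1 * x.2).erase 0) := by
  have horth : ∀ x ∈ S ×ˢ T, ∀ y ∈ S ×ˢ T, x ≠ y → x.1 * x.2 * (y.1 * y.2) = 0 := by
    rintro ⟨e, t⟩ hx ⟨e', t'⟩ hy hne
    rw [Finset.mem_product] at hx hy
    have hcomm :=
      mem_centralizer_iff_commute.1 (hT.minimal t hx.2).mem.2 e' (hS.minimal e' hy.1).mem
    rw [← mul_assoc, mul_assoc e t, ← hcomm.eq, ← mul_assoc, mul_assoc _ t]
    by_cases he : e = e'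
    · rw [hT.orth t hx.2 t' hy.2 fun ht => hne (Prod.ext he ht), mul_zero]
    · rw [hS.orth e hx.1 e' hy.1 he, zero_mul]
  refine ⟨fun f hf => ?_, fun f hf g hg hfg => ?_, ?_⟩
  · obtain ⟨h0, ⟨e, t⟩, h, rfl⟩ := by simpa only [Finset.mem_erase, Finset.mem_image] using hf
    rw [Finset.mem_product] at h
    exact hτ.isMinimalProjection_mul hBC (hS.minimal e h.1) (hT.minimal t h.2) h0
  · obtain ⟨-, x, hx, rfl⟩ := by simpa only [Finset.mem_erase, Finset.mem_image] using hf
    obtain ⟨-, y, hy, rfl⟩ := by simpa only [Finset.mem_erase, Finset.mem_image] using hg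
    exact horth x hx y hy fun h => hfg (h ▸ rfl)
  · have hidem : ∀ x ∈ S ×ˢ T, x.1 * x.2 * (x.1 * x.2) = x.1 * x.2 := fun x hx => by
      rw [Finset.mem_product] at hx
      have he := (hS.minimal x.1 hx.1)
      have ht := (hT.minimal x.2 hx.2)
      exact (he.isStarProjection.mul ht.isStarProjection
        (mem_centralizer_iff_commute.1 ht.mem.2 _ he.mem).eq).isIdempotentElem
    rw [Finset.sum_erase _ (f := fun f : A => f) rfl, Finset.sum_image_of_pairwise_eq_zero
      fun x hx y hy hne h => by rw [← hidem x hx]; nth_rw 2 [h]; exact horth x hx y hy hne,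
      Finset.sum_product, ← Finset.sum_mul_sum, hS.sum_eq, hT.sum_eq, one_mul]

/-- The diagonal of a tower of finite-dimensional algebras: `S n` partitions `1` into minimal
projections of `B n`, and each projection in `S (n + 1)` is a projection in `S n` times an
element of the span of `S (n + 1)` that commutes with `B n`. -/
structure IsDiagonalTower (B : ℕ → StarSubalgebra ℂ A) (S : ℕ → Finset A) : Prop where
  partition : ∀ n, IsMinimalPartition (B n) 1 (S n)
  exists_eq_mul : ∀ n, ∀ f ∈ S (n + 1), ∃ e ∈ S n,
    ∃ t ∈ Submodule.span ℂ (S (n + 1) : Set A),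
      t ∈ StarSubalgebra.centralizer ℂ (B n : Set A) ∧ f = e * t

theorem IsFaithfulTracialState.exists_isMinimalPartition_refinement [FiniteDimensional ℂ B]
    [FiniteDimensional ℂ C] (hτ : IsFaithfulTracialState τ) (hBC : B ≤ C) {S : Finset A}
    (hS : IsMinimalPartition B 1 S) :
    ∃ S', IsMinimalPartition C 1 S' ∧ ∀ f ∈ S', ∃ e ∈ S, ∃ t ∈ Submodule.span ℂ (S' : Set A),
      t ∈ StarSubalgebra.centralizer ℂ (B : Set A) ∧ f = e * t := by
  classical
  have : FiniteDimensional ℂ ↥(C ⊓ StarSubalgebra.centralizer ℂ (B : Set A)) :=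
    finiteDimensional_of_le_starSubalgebra inf_le_left
  obtain ⟨T, hT⟩ := exists_isMinimalPartition
    (one_mem (C ⊓ StarSubalgebra.centralizer ℂ (B : Set A))) (.one A)
  refine ⟨_, hτ.isMinimalPartition_mul hBC hS hT, fun f hf => ?_⟩
  obtain ⟨-, ⟨e, t⟩, h, rfl⟩ := by simpa only [Finset.mem_erase, Finset.mem_image] using hf
  rw [Finset.mem_product] at h
  refine ⟨e, h.1, t, ?_, (hT.minimal t h.2).mem.2, rfl⟩
  rw [← one_mul t, ← hS.sum_eq, Finset.sum_mul]
  refine sum_mem fun e' he' => ?_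
  by_cases h0 : e' * t = 0
  · convert Submodule.zero_mem _
  · exact Submodule.subset_span (Finset.mem_erase.2 ⟨h0, Finset.mem_image.2
      ⟨(e', t), Finset.mem_product.2 ⟨he', h.2⟩, rfl⟩⟩)

theorem IsFaithfulTracialState.exists_isDiagonalTower (hτ : IsFaithfulTracialState τ)
    {B : ℕ → StarSubalgebra ℂ A} (hB : Monotone B) [∀ n, FiniteDimensional ℂ (B n)] :
    ∃ S, IsDiagonalTower B S := by
  obtain ⟨S, hS, hmul⟩ := exists_seq_of_forall_exists (P := fun n => IsMinimalPartition (B n) 1)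
    (exists_isMinimalPartition (one_mem (B 0)) (.one A))
    fun n _ hS => hτ.exists_isMinimalPartition_refinement (hB n.le_succ) hS
  exact ⟨S, hS, hmul⟩

namespace IsDiagonalTower

variable {B : ℕ → StarSubalgebra ℂ A} {S : ℕ → Finset A} (hS : IsDiagonalTower B S)
include hS

theorem exists_mul_eq_self {n : ℕ} {f : A} (hf : f ∈ S (n + 1)) : ∃ e ∈ S n, e * f = f := by
  obtain ⟨e, he, t, -, -, rfl⟩ := hS.exists_eq_mul n f hf
  exact ⟨e, he, by
    rw [← mul_assoc, ((hS.partition n).minimal e he).isStarProjection.isIdempotentElem.eq]⟩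

theorem monotone_span : Monotone fun n => Submodule.span ℂ (S n : Set A) := by
  refine monotone_nat_of_le_succ fun n => Submodule.span_le.2 fun e he => ?_
  rw [SetLike.mem_coe, ← mul_one e, ← (hS.partition (n + 1)).sum_eq, Finset.mul_sum]
  refine sum_mem fun f hf => ?_
  obtain ⟨e', he', hf'⟩ := hS.exists_mul_eq_self hf
  by_cases h : e = e'
  · rw [h, hf']
    exact Submodule.subset_span hf
  · rw [← hf', ← mul_assoc, (hS.partition n).orth e he e' he' h, zero_mul]
    exact zero_mem _

theorem exists_mul_eq_mul (hB : Monotone B) {n m : ℕ} (hnm : n ≤ m) {e x : A} (he : e ∈ S n)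
    (hx : x ∈ Submodule.span ℂ (S m : Set A)) :
    ∃ z ∈ Submodule.span ℂ (S m : Set A),
      z ∈ StarSubalgebra.centralizer ℂ (B n : Set A) ∧ x * e = z * e := by
  induction m, hnm using Nat.le_induction generalizing x with
  | base =>
    obtain ⟨c, hc⟩ := (hS.partition n).exists_mul_eq_smul hx he
    exact ⟨c • 1, Submodule.smul_mem _ c (hS.partition n).one_mem_span,
      SMulMemClass.smul_mem c (one_mem _), by rw [hc, smul_one_mul]⟩
  | succ m hnm ih =>
    induction hx using Submodule.span_induction with
    | mem f hf =>
      obtain ⟨g, hg, t, ht, htB, rfl⟩ := hS.exists_eq_mul m f hf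
      obtain ⟨z, hz, hzB, hge⟩ := ih (Submodule.subset_span hg)
      have htB' : t ∈ StarSubalgebra.centralizer ℂ (B n : Set A) :=
        StarSubalgebra.centralizer_le ℂ _ _ (hB hnm) htB
      have htg := mem_centralizer_iff_commute.1 htB g ((hS.partition m).minimal g hg).mem
      refine ⟨t * z, (hS.partition (m + 1)).mul_mem_span ht (hS.monotone_span m.le_succ hz),
        mul_mem htB' hzB, ?_⟩
      rw [htg.eq, mul_assoc, hge, mul_assoc]
    | zero => exact ⟨0, zero_mem _, zero_mem _, rfl⟩
    | add x y _ _ hx hy =>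
      obtain ⟨z, hz, hzB, hxe⟩ := hx
      obtain ⟨w, hw, hwB, hye⟩ := hy
      exact ⟨z + w, add_mem hz hw, add_mem hzB hwB, by rw [add_mul, hxe, hye, add_mul]⟩
    | smul c x _ hx =>
      obtain ⟨z, hz, hzB, hxe⟩ := hx
      exact ⟨c • z, Submodule.smul_mem _ c hz, SMulMemClass.smul_mem c hzB, by
        rw [smul_mul_assoc, hxe, smul_mul_assoc]⟩

end IsDiagonalTower
end DiagonalTower

section UnitaryOptimization

variable {A : Type*} [CStarAlgebra A] [FiniteDimensional ℂ A] {τ : A →ₗ[ℂ] ℂ}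

theorem isCompact_unitary : IsCompact (unitary A : Set A) := by
  nontriviality A
  have := FiniteDimensional.proper ℂ A
  refine Metric.isCompact_of_isClosed_isBounded isClosed_unitary
    ((Metric.isBounded_closedBall (x := 0) (r := 1)).subset fun u hu => ?_)
  simp [CStarRing.norm_of_mem_unitary hu]

theorem exists_mem_unitary_forall_le {F : A → ℝ} (hF : Continuous F) :
    ∃ w ∈ unitary A, ∀ v ∈ unitary A, F v ≤ F w :=
  isCompact_unitary.exists_isMaxOn ⟨1, one_mem _⟩ hF.continuousOn

theorem continuous_re_map (τ : A →ₗ[ℂ] ℂ) : Continuous fun x => (τ x).re :=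
  Complex.continuous_re.comp τ.continuous_of_finiteDimensional

theorem hasDerivAt_re_map {f : ℝ → A} {f' : A} {t : ℝ} (hf : HasDerivAt f f' t) :
    HasDerivAt (fun t => (τ (f t)).re) (τ f').re t :=
  (Complex.reCLM.comp (τ.toContinuousLinearMap.restrictScalars ℝ)).hasFDerivAt.comp_hasDerivAt t hf

omit [FiniteDimensional ℂ A] in
theorem hasDerivAt_expUnitary_zero (x : selfAdjoint A) :
    HasDerivAt (fun t : ℝ => (selfAdjoint.expUnitary (t • x) : A)) (Complex.I • (x : A)) 0 := by
  have h := hasDerivAt_exp_smul_const (𝕂 := ℝ) (Complex.I • (x : A)) 0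
  simpa [smul_comm Complex.I] using h

theorem re_map_eq_zero_of_forall_unitary {x z : A} (hx : IsSelfAdjoint x)
    (hz : ∀ v ∈ unitary A, (τ (v * z)).re ≤ (τ z).re) : (τ (Complex.I • x * z)).re = 0 := by
  refine IsLocalMax.hasDerivAt_eq_zero (Eventually.of_forall fun t => ?_)
    (hasDerivAt_re_map ((hasDerivAt_expUnitary_zero ⟨x, hx⟩).mul_const z))
  simpa using! hz _ (selfAdjoint.expUnitary (t • ⟨x, hx⟩)).2

theorem re_map_eq_zero_of_forall_unitary_conj {x k d : A} (hx : IsSelfAdjoint x)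
    (hk : ∀ v ∈ unitary A, (τ (v * k * star v * d)).re ≤ (τ (k * d)).re) :
    (τ ((Complex.I • x * k - k * (Complex.I • x)) * d)).re = 0 := by
  have h := hasDerivAt_expUnitary_zero ⟨x, hx⟩
  have h' := (((h.mul_const k).mul h.star).mul_const d)
  simp only [zero_smul, selfAdjoint.expUnitary_zero, OneMemClass.coe_one, star_one, mul_one,
    one_mul, star_smul, hx.star_eq, Complex.star_def, Complex.conj_I, neg_smul, mul_neg,
    ← sub_eq_add_neg] at h'
  refine IsLocalMax.hasDerivAt_eq_zero (Eventually.of_forall fun t => ?_) (hasDerivAt_re_map h')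
  simpa using! hk _ (selfAdjoint.expUnitary (t • ⟨x, hx⟩)).2

namespace IsFaithfulTracialState

variable (hτ : IsFaithfulTracialState τ)
include hτ

/-- Take a unitary `w` maximizing `Re τ(wy)`. -/
theorem exists_unitary_isSelfAdjoint_mul (y : A) : ∃ w ∈ unitary A, IsSelfAdjoint (w * y) := by
  obtain ⟨w, hw, hmax⟩ := exists_mem_unitary_forall_le
    ((continuous_re_map τ).comp (continuous_mul_const y))
  refine ⟨w, hw, ?_⟩
  set z := w * y
  have hx : IsSelfAdjoint (Complex.I • (z - star z)) := by
    simp [IsSelfAdjoint, star_smul, smul_sub, neg_add_eq_sub]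
  have h := re_map_eq_zero_of_forall_unitary (τ := τ) (z := z) hx fun v hv => by
    simpa [z, mul_assoc] using hmax _ (mul_mem hv hw)
  have hzz : (τ (star (z - star z) * (z - star z))).re = 0 := by
    have h1 := congrArg Complex.re (hτ.map_mul_comm z (star z))
    have h2 := congrArg Complex.re (hτ.map_star (z * z))
    simp only [star_mul, Complex.star_def, Complex.conj_re] at h2
    simp [smul_smul, sub_mul] at h
    simp only [star_sub, star_star, sub_mul, mul_sub, map_sub, Complex.sub_re]
    linarith
  rw [← hτ.twoNorm_sq, sq_eq_zero_iff] at hzz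
  exact (sub_eq_zero.1 (hτ.twoNorm_eq_zero hzz)).symm

/-- Multiply the unitary of the polar decomposition by the sign of the self-adjoint part. -/
theorem exists_unitary_twoNorm_sq_le {y : A} (hy : ‖y‖ ≤ 1) :
    ∃ w ∈ unitary A, twoNorm τ y ^ 2 ≤ (τ (w * y)).re := by
  have : Nontrivial A := ⟨1, 0, fun h => by simpa [h] using hτ.map_one⟩
  obtain ⟨g, hg, hz⟩ := hτ.exists_unitary_isSelfAdjoint_mul y
  set z := g * y
  have : FiniteDimensional ℂ (⊤ : StarSubalgebra ℂ A) :=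
    FiniteDimensional.finiteDimensional_submodule (⊤ : Submodule ℂ A)
  have hcont : ∀ f : ℝ → ℝ, ContinuousOn f (spectrum ℝ z) :=
    continuousOn_real_spectrum_of_mem_finiteDimensional (B := ⊤) trivial
  have hz1 : ∀ t ∈ spectrum ℝ z, |t| ≤ 1 := fun t ht => by
    refine (spectrum.norm_le_norm_of_mem ht).trans ?_
    simpa [z, CStarRing.norm_mem_unitary_mul y hg] using hy
  let sgn : ℝ → ℝ := fun t => if 0 ≤ t then 1 else -1
  have hsgn : ∀ t, sgn t * sgn t = 1 := fun t => by by_cases h : 0 ≤ t <;> simp [sgn, h]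
  have hsgn' : ∀ t, t * sgn t = |t| := fun t => by
    by_cases h : 0 ≤ t
    · simp [sgn, h, abs_of_nonneg]
    · simp [sgn, h, abs_of_neg (not_le.1 h)]
  have hs : IsSelfAdjoint (cfc sgn z) := cfc_predicate sgn z
  have hss : cfc sgn z * cfc sgn z = 1 := by
    rw [← cfc_mul sgn sgn z (hcont _) (hcont _), cfc_congr fun t _ => hsgn t, cfc_const_one ℝ z]
  refine ⟨cfc sgn z * g, mul_mem (Unitary.mem_iff.2 (by simp [hs.star_eq, hss])) hg, ?_⟩
  let r := cfc (fun t => √(|t| - t * t)) z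
  have hr : star r * r = z * cfc sgn z - star z * z := by
    rw [(cfc_predicate _ z : IsSelfAdjoint r).star_eq, hz.star_eq, mul_cfc hz (hcont _),
      ← cfc_mul _ _ z (hcont _) (hcont _)]
    nth_rw 3 4 [← cfc_id' ℝ z]
    rw [← cfc_mul _ _ z (hcont _) (hcont _), ← cfc_sub _ _ z (hcont _) (hcont _)]
    refine cfc_congr fun t ht => ?_
    rw [hsgn', Real.mul_self_sqrt]
    nlinarith [hz1 t ht, abs_nonneg t, abs_mul_abs_self t]
  have h := hτ.nonneg r
  rwa [hr, map_sub, Complex.sub_re, sub_nonneg, hτ.map_mul_comm z, ← hτ.twoNorm_sq,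
    twoNorm_unitary_mul hg, ← mul_assoc] at h

theorem exists_unitary_conj_commute {h d : A} (hh : IsSelfAdjoint h) (hd : IsSelfAdjoint d) :
    ∃ w ∈ unitary A, Commute (w * h * star w) d ∧
      twoNorm τ (w * h * star w - d) ≤ twoNorm τ (h - d) := by
  obtain ⟨w, hw, hmax⟩ := exists_mem_unitary_forall_le (F := fun w => (τ (w * h * star w * d)).re)
    ((continuous_re_map τ).comp (by fun_prop))
  set k := w * h * star w
  have hk : IsSelfAdjoint k := hh.conjugate w
  refine ⟨w, hw, ?_, ?_⟩
  · set x := Complex.I • (k * d - d * k)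
    have hx : IsSelfAdjoint x := by
      simp [x, IsSelfAdjoint, star_smul, smul_sub, hk.star_eq, hd.star_eq, neg_add_eq_sub]
    have hkx : τ ((Complex.I • x * k - k * (Complex.I • x)) * d) = τ (star x * x) := by
      have hIx : Complex.I • x = d * k - k * d := by simp [x, smul_smul]
      have hcyc := hτ.map_mul_comm k ((d * k - k * d) * d)
      rw [hx.star_eq, ← neg_neg (x * x), ← neg_one_smul ℂ (x * x), ← Complex.I_mul_I,
        ← smul_mul_smul_comm, hIx, map_neg]
      simp only [sub_mul, mul_sub, map_sub, mul_assoc] at hcyc ⊢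
      linear_combination -hcyc
    have h := re_map_eq_zero_of_forall_unitary_conj (τ := τ) (k := k) (d := d) hx fun v hv => by
      simpa [k, mul_assoc] using hmax _ (mul_mem hv hw)
    rw [hkx, ← hτ.twoNorm_sq, sq_eq_zero_iff] at h
    have hx0 := hτ.twoNorm_eq_zero h
    rwa [smul_eq_zero_iff_right Complex.I_ne_zero, sub_eq_zero] at hx0
  · have hexpand : ∀ a, IsSelfAdjoint a → twoNorm τ (a - d) ^ 2 =
        twoNorm τ a ^ 2 + twoNorm τ d ^ 2 - 2 * (τ (a * d)).re := fun a ha => by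
      simp only [hτ.twoNorm_sq, star_sub, sub_mul, mul_sub, map_sub, Complex.sub_re, ha.star_eq,
        hd.star_eq, hτ.map_mul_comm d a]
      ring
    have hkh : twoNorm τ k = twoNorm τ h := by
      rw [hτ.twoNorm_mul_unitary (Unitary.star_mem hw), twoNorm_unitary_mul hw]
    have hle := hmax 1 (one_mem _)
    rw [star_one, mul_one, one_mul] at hle
    refine (sq_le_sq₀ (twoNorm_nonneg _) (twoNorm_nonneg _)).1 ?_
    rw [hexpand k hk, hexpand h hh, hkh]
    linarith

end IsFaithfulTracialState
end UnitaryOptimization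

section ProjectionPartition

variable {A : Type*} [CStarAlgebra A] {B : StarSubalgebra ℂ A} {τ : A →ₗ[ℂ] ℂ}
  {ι : Type*} [Fintype ι] {p q : ι → A} {c : ι → ℝ}

/-- A finite family of mutually orthogonal projections with sum `1`. -/
structure IsProjectionPartition (p : ι → A) : Prop extends CompleteOrthogonalIdempotents p where
  isSelfAdjoint : ∀ i, IsSelfAdjoint (p i)

/-- The self-adjoint element `∑ᵢ cᵢ pᵢ` with spectral projections `pᵢ`. -/
def weightedSum (c : ι → ℝ) (p : ι → A) : A := ∑ i, (c i : ℂ) • p i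

/-- The conditional expectation `x ↦ ∑ᵢ pᵢ x pᵢ` onto the commutant of the `pᵢ`. -/
def pinching (p : ι → A) (x : A) : A := ∑ i, p i * x * p i

theorem weightedSum_mem (hp : ∀ i, p i ∈ B) : weightedSum c p ∈ B :=
  sum_mem fun i _ => B.smul_mem (hp i) _

theorem weightedSum_mem_submodule {V : Submodule ℂ A} (hp : ∀ i, p i ∈ V) : weightedSum c p ∈ V :=
  sum_mem fun i _ => V.smul_mem _ (hp i)

theorem weightedSum_conj (c : ι → ℝ) (p : ι → A) (u v : A) :
    weightedSum c (fun i => u * p i * v) = u * weightedSum c p * v := by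
  simp only [weightedSum, Finset.mul_sum, Finset.sum_mul, mul_smul_comm, smul_mul_assoc]

theorem pinching_mem (hp : ∀ i, p i ∈ B) {x : A} (hx : x ∈ B) : pinching p x ∈ B :=
  sum_mem fun i _ => mul_mem (mul_mem (hp i) hx) (hp i)

theorem IsMinimalPartition.isProjectionPartition {S : Finset A}
    (hS : IsMinimalPartition B 1 S) : IsProjectionPartition (Subtype.val : S → A) where
  idem e := (hS.minimal e e.2).isStarProjection.isIdempotentElem
  ortho e f hef := hS.orth e e.2 f f.2 fun h => hef (Subtype.ext h)
  complete := by rw [Finset.sum_coe_sort S fun e => e, hS.sum_eq]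
  isSelfAdjoint e := (hS.minimal e e.2).isStarProjection.isSelfAdjoint

namespace IsProjectionPartition

variable (hp : IsProjectionPartition p)
include hp

theorem isStarProjection (i : ι) : IsStarProjection (p i) := ⟨hp.idem i, hp.isSelfAdjoint i⟩

theorem norm_le_one (i : ι) : ‖p i‖ ≤ 1 := (hp.isStarProjection i).norm_le _

theorem conj {u : A} (hu : u ∈ unitary A) :
    IsProjectionPartition fun i => u * p i * star u where
  toCompleteOrthogonalIdempotents := hp.toCompleteOrthogonalIdempotents.map
    (RingHomClass.toRingHom (Unitary.conjStarAlgAut ℂ A ⟨u, hu⟩))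
  isSelfAdjoint i := (hp.isSelfAdjoint i).conjugate u

theorem isSelfAdjoint_weightedSum (c : ι → ℝ) : IsSelfAdjoint (weightedSum c p) := by
  simp [IsSelfAdjoint, weightedSum, star_sum, star_smul, (hp.isSelfAdjoint _).star_eq]

theorem weightedSum_mul (c : ι → ℝ) (i : ι) : weightedSum c p * p i = (c i : ℂ) • p i := by
  classical
  simp [weightedSum, Finset.sum_mul, hp.mul_eq]

theorem mul_weightedSum (c : ι → ℝ) (i : ι) : p i * weightedSum c p = (c i : ℂ) • p i := by
  classical
  simp [weightedSum, Finset.mul_sum, hp.mul_eq]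

theorem eq_sum_sum (hq : IsProjectionPartition q) (x : A) : x = ∑ i, ∑ j, p i * x * q j := by
  simp only [← Finset.mul_sum, ← Finset.sum_mul, hp.complete, hq.complete, mul_one, one_mul]

theorem smul_mul_mul (c : ι → ℝ) (x : A) (i j : ι) :
    ((c j - c i : ℝ) : ℂ) • (p i * x * p j) =
      p i * (x * weightedSum c p - weightedSum c p * x) * p j := by
  calc ((c j - c i : ℝ) : ℂ) • (p i * x * p j)
      = p i * x * ((c j : ℂ) • p j) - ((c i : ℂ) • p i) * x * p j := by
        simp [sub_smul, mul_assoc]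
    _ = p i * (x * weightedSum c p - weightedSum c p * x) * p j := by
        rw [← hp.weightedSum_mul, ← hp.mul_weightedSum]
        simp only [mul_sub, sub_mul, mul_assoc]

theorem commute_of_commute_weightedSum (hc : Function.Injective c) {x : A}
    (hx : Commute x (weightedSum c p)) (i : ι) : Commute x (p i) := by
  have h : ∀ j k, j ≠ k → p j * x * p k = 0 := fun j k hjk => by
    have := hp.smul_mul_mul c x j k
    rw [hx.eq, sub_self, mul_zero, zero_mul, smul_eq_zero] at this
    refine this.resolve_left ?_
    simpa [sub_eq_zero] using (hc.ne hjk).symm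
  have hleft : p i * x = p i * x * p i := by
    rw [← mul_one (p i * x), ← hp.complete, Finset.mul_sum,
      Finset.sum_eq_single_of_mem i (Finset.mem_univ i) fun j _ hj => h i j hj.symm,
      mul_assoc _ (p i), (hp.idem i).eq]
  have hright : x * p i = p i * x * p i := by
    rw [← one_mul (x * p i), ← hp.complete, Finset.sum_mul]
    simp only [← mul_assoc]
    rw [Finset.sum_eq_single_of_mem i (Finset.mem_univ i) fun j _ hj => h j i hj]
  exact hright.trans hleft.symm

theorem commute_pinching (x : A) (i : ι) : Commute (pinching p x) (p i) := by
  classical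
  simp only [Commute, SemiconjBy, pinching, Finset.sum_mul, Finset.mul_sum, mul_assoc, hp.mul_eq]
  simp [← mul_assoc, hp.mul_eq]

/-- For `x` unitary, `1 - (∑ᵢ pᵢ x pᵢ)⋆ (∑ᵢ pᵢ x pᵢ) = ∑ᵢ zᵢ⋆ zᵢ` with `zᵢ = (1 - pᵢ) x pᵢ`. -/
theorem norm_pinching_le_one {x : A} (hx : x ∈ unitary A) : ‖pinching p x‖ ≤ 1 := by
  classical
  let := CStarAlgebra.spectralOrder A
  let := CStarAlgebra.spectralOrderedRing A
  have hstar : ∀ i, star (p i) = p i := fun i => (hp.isSelfAdjoint i).star_eq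
  have hz : ∀ i, star ((1 - p i) * x * p i) * ((1 - p i) * x * p i) =
      p i - p i * star x * p i * x * p i := fun i => by
    have hii := (hp.isStarProjection i).one_sub
    calc star ((1 - p i) * x * p i) * ((1 - p i) * x * p i)
        = p i * star x * (star (1 - p i) * (1 - p i)) * x * p i := by
          simp only [star_mul, hstar, mul_assoc]
      _ = p i * (star x * x) * p i - p i * star x * p i * x * p i := by
          rw [hii.isSelfAdjoint.star_eq, hii.isIdempotentElem.eq]
          simp only [mul_sub, sub_mul, mul_one, mul_assoc]
      _ = p i - p i * star x * p i * x * p i := by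
          rw [Unitary.star_mul_self_of_mem hx, mul_one, (hp.idem i).eq]
  have haa : star (pinching p x) * pinching p x = ∑ i, p i * star x * p i * x * p i := by
    simp only [pinching, star_sum, star_mul, hstar, Finset.sum_mul_sum]
    refine Finset.sum_congr rfl fun i _ => ?_
    rw [Finset.sum_eq_single_of_mem i (Finset.mem_univ i) fun j _ hj => ?_]
    · simp only [mul_assoc, ← mul_assoc (p i) (p i), (hp.idem i).eq]
    · simp only [mul_assoc, ← mul_assoc (p i) (p j), hp.ortho hj.symm, zero_mul, mul_zero]
  have hle : star (pinching p x) * pinching p x ≤ 1 := by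
    rw [haa, ← hp.complete]
    refine Finset.sum_le_sum fun i _ => sub_nonneg.1 ?_
    rw [← hz]
    exact star_mul_self_nonneg _
  have := CStarAlgebra.norm_le_one_iff_of_nonneg _ (star_mul_self_nonneg (pinching p x)) |>.2 hle
  rw [CStarRing.norm_star_mul_self] at this
  nlinarith [norm_nonneg (pinching p x)]

section Trace

variable (hτ : IsFaithfulTracialState τ)
include hτ

theorem map_mul_pinching {g : A} (hg : ∀ i, Commute g (p i)) (x : A) :
    τ (g * pinching p x) = τ (g * x) := by
  calc τ (g * pinching p x) = ∑ i, τ (p i * (g * x)) := by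
        rw [pinching, Finset.mul_sum, map_sum]
        refine Finset.sum_congr rfl fun i _ => ?_
        rw [← mul_assoc, ← mul_assoc, (hg i).eq, hτ.map_mul_comm, ← mul_assoc, ← mul_assoc,
          (hp.idem i).eq, mul_assoc]
    _ = τ (g * x) := by rw [← map_sum, ← Finset.sum_mul, hp.complete, one_mul]

theorem twoNorm_corner_le (hq : IsProjectionPartition q) (x : A) (i j : ι) :
    twoNorm τ (p i * x * q j) ≤ twoNorm τ x :=
  (hτ.twoNorm_mul_le_of_norm_le_one_right (hq.norm_le_one j) _).trans
    (hτ.twoNorm_mul_le_of_norm_le_one_left (hp.norm_le_one i) _)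

theorem twoNorm_le_of_forall_corner_le (hq : IsProjectionPartition q) {x : A} {K : ℝ}
    (h : ∀ i j, twoNorm τ (p i * x * q j) ≤ K) : twoNorm τ x ≤ Fintype.card ι ^ 2 * K :=
  calc twoNorm τ x ≤ ∑ _i : ι, ∑ _j : ι, K := by
        rw [hp.eq_sum_sum hq x]
        refine (hτ.twoNorm_sum_le _ _).trans (Finset.sum_le_sum fun i _ => ?_)
        exact (hτ.twoNorm_sum_le _ _).trans (Finset.sum_le_sum fun j _ => h i j)
    _ = Fintype.card ι ^ 2 * K := by simp; ring

theorem twoNorm_sub_pinching_le (hc : Pairwise fun i j => 1 ≤ |c i - c j|) (x : A) :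
    twoNorm τ (x - pinching p x) ≤
      Fintype.card ι ^ 2 * twoNorm τ (x * weightedSum c p - weightedSum c p * x) := by
  classical
  refine hp.twoNorm_le_of_forall_corner_le hτ hp fun i j => ?_
  have hpinch : p i * pinching p x * p j = if i = j then p i * x * p i else 0 := by
    rw [mul_assoc, (hp.commute_pinching x j).eq, ← mul_assoc, hp.mul_eq]
    split_ifs with hij
    · simp [pinching, Finset.mul_sum, ← mul_assoc, hp.mul_eq]
    · exact zero_mul _
  rw [mul_sub, sub_mul, hpinch]
  split_ifs with hij
  · simpa [hij, twoNorm_zero] using twoNorm_nonneg _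
  · refine le_trans ?_ (hp.twoNorm_corner_le hτ hp _ i j)
    rw [sub_zero, ← hp.smul_mul_mul, twoNorm_smul, Complex.norm_real, Real.norm_eq_abs,
      abs_sub_comm]
    exact le_mul_of_one_le_left (twoNorm_nonneg _) (hc hij)

end Trace
end IsProjectionPartition
end ProjectionPartition

section Perturbation

variable {A : Type*} [CStarAlgebra A] {B : StarSubalgebra ℂ A} {τ : A →ₗ[ℂ] ℂ}
  {ι : Type*} [Fintype ι] {p q : ι → A} {c : ι → ℝ}

namespace IsFaithfulTracialState

variable (hτ : IsFaithfulTracialState τ)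
include hτ

theorem comp_subtype [IsClosed (B : Set A)] :
    IsFaithfulTracialState (τ ∘ₗ B.toSubalgebra.toSubmodule.subtype : B →ₗ[ℂ] ℂ) where
  map_one := hτ.map_one
  map_mul_comm x y := hτ.map_mul_comm x y
  nonneg x := hτ.nonneg x
  im_eq_zero x := hτ.im_eq_zero x
  eq_zero x hx := Subtype.ext (hτ.eq_zero x hx)

theorem exists_mem_unitary_twoNorm_sq_le [FiniteDimensional ℂ B] {y : A} (hyB : y ∈ B)
    (hy : ‖y‖ ≤ 1) : ∃ w ∈ B, w ∈ unitary A ∧ twoNorm τ y ^ 2 ≤ (τ (w * y)).re := by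
  have := isClosed_of_finiteDimensional_starSubalgebra B
  obtain ⟨w, hw, h⟩ := hτ.comp_subtype.exists_unitary_twoNorm_sq_le (y := (⟨y, hyB⟩ : B)) hy
  exact ⟨w, w.2, Unitary.map_mem B.subtype hw, h⟩

theorem exists_mem_unitary_conj_commute [FiniteDimensional ℂ B] {h d : A} (hhB : h ∈ B)
    (hdB : d ∈ B) (hh : IsSelfAdjoint h) (hd : IsSelfAdjoint d) :
    ∃ w ∈ B, w ∈ unitary A ∧ Commute (w * h * star w) d ∧
      twoNorm τ (w * h * star w - d) ≤ twoNorm τ (h - d) := by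
  have := isClosed_of_finiteDimensional_starSubalgebra B
  obtain ⟨w, hw, hcomm, hle⟩ := hτ.comp_subtype.exists_unitary_conj_commute
    (h := (⟨h, hhB⟩ : B)) (d := ⟨d, hdB⟩) (Subtype.ext hh.star_eq) (Subtype.ext hd.star_eq)
  exact ⟨w, w.2, Unitary.map_mem B.subtype hw, hcomm.map B.subtype, hle⟩

theorem twoNorm_sub_one_sq {u : A} (hu : u ∈ unitary A) :
    twoNorm τ (u - 1) ^ 2 = 2 - 2 * (τ u).re := by
  rw [hτ.twoNorm_sq, star_sub, star_one, sub_mul, mul_sub, mul_one, one_mul,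
    Unitary.star_mul_self_of_mem hu]
  simp only [map_sub, hτ.map_star u, hτ.map_one, Complex.sub_re, Complex.one_re, Complex.star_def,
    Complex.conj_re]
  ring

theorem twoNorm_commutator {u : A} (hu : u ∈ unitary A) (x : A) :
    twoNorm τ (u * x - x * u) = twoNorm τ (u * x * star u - x) := by
  rw [← hτ.twoNorm_mul_unitary hu (u * x * star u - x), sub_mul, mul_assoc (u * x),
    Unitary.star_mul_self_of_mem hu, mul_one]

end IsFaithfulTracialState

namespace IsMinimalPartition

variable {S : Finset A} (hS : IsMinimalPartition B 1 S)
include hS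

theorem mem_span_of_forall_commute {y : A} (hy : y ∈ B) (h : ∀ e ∈ S, Commute y e) :
    y ∈ Submodule.span ℂ (S : Set A) := by
  rw [← mul_one y, ← hS.sum_eq, Finset.mul_sum]
  refine sum_mem fun e he => ?_
  obtain ⟨c, hc⟩ := (hS.minimal e he).exists_eq_smul y hy
  rw [← (hS.minimal e he).isStarProjection.isIdempotentElem.eq, ← mul_assoc, (h e he).eq, hc]
  exact Submodule.smul_mem _ c (Submodule.subset_span he)

theorem exists_generator : ∃ d ∈ Submodule.span ℂ (S : Set A), IsSelfAdjoint d ∧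
    ∀ y ∈ B, Commute y d → y ∈ Submodule.span ℂ (S : Set A) := by
  obtain ⟨f, hf⟩ := exists_injective_nat S
  have hp := hS.isProjectionPartition
  refine ⟨weightedSum (fun e => (f e : ℝ)) Subtype.val,
    weightedSum_mem_submodule fun e => Submodule.subset_span e.2, hp.isSelfAdjoint_weightedSum _,
    fun y hy hyd => hS.mem_span_of_forall_commute hy fun e he => ?_⟩
  exact hp.commute_of_commute_weightedSum (Nat.cast_injective.comp hf) hyd ⟨e, he⟩

theorem mem_span_of_weightedSum_mem_span (hp : IsProjectionPartition p) (hpB : ∀ i, p i ∈ B)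
    (hc : Function.Injective c) (h : weightedSum c p ∈ Submodule.span ℂ (S : Set A)) (i : ι) :
    p i ∈ Submodule.span ℂ (S : Set A) :=
  hS.mem_span_of_forall_commute (hpB i) fun _ he =>
    (hp.commute_of_commute_weightedSum hc
      (hS.commute_of_mem_span (Submodule.subset_span he) h) i).symm

/-- First conjugate `h` into the commutant of `d`, then, inside that commutant, into the commutant
of a generator of the diagonal. -/
theorem exists_unitary_conj_mem_span [FiniteDimensional ℂ B] (hτ : IsFaithfulTracialState τ)
    {h d : A} (hhB : h ∈ B) (hh : IsSelfAdjoint h) (hdS : d ∈ Submodule.span ℂ (S : Set A))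
    (hd : IsSelfAdjoint d) :
    ∃ w ∈ B, w ∈ unitary A ∧ w * h * star w ∈ Submodule.span ℂ (S : Set A) ∧
      twoNorm τ (w * h * star w - d) ≤ twoNorm τ (h - d) := by
  obtain ⟨g, hgS, hg, hgen⟩ := hS.exists_generator
  obtain ⟨v, hvB, hv, hcomm, hle⟩ :=
    hτ.exists_mem_unitary_conj_commute hhB (hS.span_le hdS) hh hd
  let N := B ⊓ StarSubalgebra.centralizer ℂ {d}
  have hN : ∀ x ∈ B, Commute x d → x ∈ N := fun x hx hxd => ⟨hx,
    (StarSubalgebra.mem_centralizer_iff ℂ).2 fun _ h => by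
      rw [h, hd.star_eq]; exact ⟨hxd.eq.symm, hxd.eq.symm⟩⟩
  have : FiniteDimensional ℂ N := finiteDimensional_of_le_starSubalgebra (B := B) inf_le_left
  obtain ⟨w, ⟨hwB, hwd⟩, hw, hcomm', -⟩ := hτ.exists_mem_unitary_conj_commute (B := N)
    (hN _ (mul_mem (mul_mem hvB hhB) (star_mem hvB)) hcomm)
    (hN g (hS.span_le hgS) (hS.commute_of_mem_span hgS hdS)) (hh.conjugate v) hg
  have hwd' : d * w = w * d := ((StarSubalgebra.mem_centralizer_iff ℂ).1 hwd d rfl).1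
  have hwv : w * v * h * star (w * v) = w * (v * h * star v) * star w := by
    simp only [star_mul, mul_assoc]
  refine ⟨w * v, mul_mem hwB hvB, mul_mem hw hv, ?_, ?_⟩ <;> rw [hwv]
  · refine hgen _ ?_ hcomm'
    exact mul_mem (mul_mem hwB (mul_mem (mul_mem hvB hhB) (star_mem hvB))) (star_mem hwB)
  · have hsub : w * (v * h * star v) * star w - d = w * (v * h * star v - d) * star w := by
      rw [mul_sub, sub_mul, ← hwd', mul_assoc d, Unitary.mul_star_self_of_mem hw, mul_one]
    rwa [hsub, hτ.twoNorm_mul_unitary (Unitary.star_mem hw), twoNorm_unitary_mul hw]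

end IsMinimalPartition

namespace IsProjectionPartition

variable (hτ : IsFaithfulTracialState τ) (hp : IsProjectionPartition p)
include hτ hp

theorem twoNorm_sub_pinching_sq (x : A) :
    twoNorm τ (x - pinching p x) ^ 2 = twoNorm τ x ^ 2 - twoNorm τ (pinching p x) ^ 2 := by
  set a := pinching p x
  have ha : τ (star a * x) = τ (star a * a) := Eq.symm <| hp.map_mul_pinching hτ
    (fun i => by simpa [(hp.isSelfAdjoint i).star_eq] using (hp.commute_pinching x i).star_star) x
  have ha' : τ (star x * a) = star (τ (star a * x)) := by rw [← hτ.map_star, star_mul, star_star]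
  have him := hτ.map_star (star a * a)
  rw [star_mul, star_star] at him
  rw [hτ.twoNorm_sq, hτ.twoNorm_sq, hτ.twoNorm_sq, star_sub, sub_mul, mul_sub, mul_sub]
  simp only [map_sub, ha', ha, ← him, Complex.sub_re]
  ring

/-- Correct `w` by a unitary `g` commuting with the `pᵢ` such that `‖a‖₂² ≤ Re τ(ga)` for the
pinching `a` of `w`; then `‖wg - 1‖₂² = 2 - 2 Re τ(ga) ≤ 2 (1 - ‖a‖₂²) = 2 ‖w - a‖₂²`. -/
theorem exists_unitary_conj_eq_twoNorm_sub_one_le [FiniteDimensional ℂ B] (hpB : ∀ i, p i ∈ B)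
    (hc : Pairwise fun i j => 1 ≤ |c i - c j|) {w : A} (hwB : w ∈ B) (hw : w ∈ unitary A) :
    ∃ v ∈ unitary A, (∀ i, v * p i * star v = w * p i * star w) ∧ twoNorm τ (v - 1) ≤
      2 * Fintype.card ι ^ 2 * twoNorm τ (w * weightedSum c p * star w - weightedSum c p) := by
  let N := B ⊓ StarSubalgebra.centralizer ℂ (Set.range p)
  have : FiniteDimensional ℂ N := finiteDimensional_of_le_starSubalgebra (B := B) inf_le_left
  have hN : ∀ x, (∀ i, Commute x (p i)) → x ∈ StarSubalgebra.centralizer ℂ (Set.range p) :=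
    fun x hx => (StarSubalgebra.mem_centralizer_iff ℂ).2 fun _ ⟨i, hi⟩ => by
      rw [← hi, (hp.isSelfAdjoint i).star_eq]; exact ⟨(hx i).eq.symm, (hx i).eq.symm⟩
  set a := pinching p w
  obtain ⟨g, ⟨-, hgp⟩, hg, hle⟩ := hτ.exists_mem_unitary_twoNorm_sq_le (B := N) (y := a)
    ⟨pinching_mem hpB hwB, hN a (hp.commute_pinching w)⟩ (hp.norm_pinching_le_one hw)
  have hgp' : ∀ i, Commute g (p i) := fun i =>
    (((StarSubalgebra.mem_centralizer_iff ℂ).1 hgp _ ⟨i, rfl⟩).1).symm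
  refine ⟨w * g, mul_mem hw hg, fun i => ?_, ?_⟩
  · calc w * g * p i * star (w * g) = w * (p i * (g * star g)) * star w := by
          rw [mul_assoc w, (hgp' i).eq, star_mul]; simp only [mul_assoc]
      _ = w * p i * star w := by rw [Unitary.mul_star_self_of_mem hg, mul_one]
  · have hwa := hp.twoNorm_sub_pinching_le hτ hc w
    rw [hτ.twoNorm_commutator hw] at hwa
    have hsq : twoNorm τ (w * g - 1) ^ 2 ≤ 2 * twoNorm τ (w - a) ^ 2 := by
      rw [hτ.twoNorm_sub_one_sq (mul_mem hw hg), hp.twoNorm_sub_pinching_sq hτ, hτ.map_mul_comm,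
        ← hp.map_mul_pinching hτ hgp', ← mul_one w, twoNorm_unitary_mul hw, hτ.twoNorm_one, mul_one]
      linarith
    nlinarith [twoNorm_nonneg (τ := τ) (w - a), twoNorm_nonneg (τ := τ) (w * g - 1)]

end IsProjectionPartition

end Perturbation

section Rounding

variable {A : Type*} [CStarAlgebra A] {B : StarSubalgebra ℂ A} {τ : A →ₗ[ℂ] ℂ}
  {ι : Type*} [Fintype ι] {p q : ι → A} {c : ι → ℝ}

theorem isProjectionPartition_cfc [DecidableEq ι] {k : A} (hk : IsSelfAdjoint k)
    (hcont : ∀ f : ℝ → ℝ, ContinuousOn f (spectrum ℝ k)) (ν : ℝ → ι) :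
    IsProjectionPartition fun j => cfc (fun t => if ν t = j then (1 : ℝ) else 0) k where
  idem j := (isStarProjection_cfc (hcont _) (fun t _ => by split_ifs <;> simp)).isIdempotentElem
  ortho i j hij := by
    have : ∀ t, ¬ (ν t = i ∧ ν t = j) := fun t h => hij (h.1.symm.trans h.2)
    change cfc _ k * cfc _ k = 0
    rw [← cfc_mul _ _ k (hcont _) (hcont _), ← cfc_zero ℝ k]
    congr 1
    ext t
    by_cases h : ν t = i <;> simp_all
  complete := by
    rw [← cfc_sum_univ _ k fun j => hcont _, ← cfc_one ℝ k hk]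
    congr 1
    ext t
    simp
  isSelfAdjoint j := cfc_predicate _ _

theorem IsProjectionPartition.mul_weightedSum_sub_mul (hq : IsProjectionPartition q)
    (hp : IsProjectionPartition p) (i j : ι) :
    q j * (weightedSum c q - weightedSum c p) * p i = ((c j - c i : ℝ) : ℂ) • (q j * p i) := by
  rw [mul_sub, sub_mul, hq.mul_weightedSum, mul_assoc, hp.weightedSum_mul]
  simp [sub_smul]

/-- `(cⱼ - cᵢ) χⱼ(k) pᵢ = g(k) (k - h) pᵢ` for `g(t) = χⱼ(t) (cⱼ - cᵢ) / (t - cᵢ)`, and `|g| ≤ 2`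
because `cⱼ` is the weight nearest to `t` whenever `χⱼ(t) ≠ 0`. -/
theorem IsProjectionPartition.exists_smul_cfc_mul_eq [DecidableEq ι] (hp : IsProjectionPartition p)
    {k : A} (hk : IsSelfAdjoint k) (hcont : ∀ f : ℝ → ℝ, ContinuousOn f (spectrum ℝ k))
    {ν : ℝ → ι} (hν : ∀ t i, |c (ν t) - t| ≤ |c i - t|) (i j : ι) :
    ∃ g : A, ‖g‖ ≤ 2 ∧
      ((c j - c i : ℝ) : ℂ) • (cfc (fun t => if ν t = j then (1 : ℝ) else 0) k * p i) =
        g * (k - weightedSum c p) * p i := by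
  let χ : ℝ → ℝ := fun t => if ν t = j then 1 else 0
  let g : ℝ → ℝ := fun t => χ t * ((c j - c i) / (t - c i))
  have hg : ∀ t, |g t| ≤ 2 := fun t => by
    by_cases h : ν t = j
    · have h1 := hν t i
      rw [h, abs_sub_comm (c i)] at h1
      have h2 := abs_sub_le (c j) t (c i)
      rw [show g t = (c j - c i) / (t - c i) by simp [g, χ, h], abs_div]
      exact div_le_of_le_mul₀ (abs_nonneg _) zero_le_two (by linarith)
    · simp [g, χ, h]
  have hgmul : ∀ t, (c j - c i) * χ t = t * g t - c i * g t := fun t => by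
    by_cases h : ν t = j
    · have h1 := hν t i
      rw [h] at h1
      by_cases ht : t = c i
      · subst ht
        simp [abs_nonpos_iff, sub_eq_zero] at h1
        simp [g, h1]
      · have := sub_ne_zero.2 ht
        simp only [g]
        field_simp
    · simp [g, χ, h]
  refine ⟨cfc g k, norm_cfc_le zero_le_two fun t _ => hg t, ?_⟩
  have hcfc : ((c j - c i : ℝ) : ℂ) • cfc χ k = cfc g k * k - (c i : ℂ) • cfc g k := by
    rw [Complex.coe_smul, Complex.coe_smul, ← cfc_const_mul _ _ k (hcont _),
      ← cfc_const_mul _ _ k (hcont _), cfc_congr fun t _ => hgmul t,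
      cfc_sub _ _ k (hcont _) (hcont _), ← mul_cfc hk (hcont _), (hk.commute_cfc (.refl k) g).eq]
  rw [← smul_mul_assoc, hcfc, mul_sub, sub_mul, sub_mul, mul_assoc _ (weightedSum c p),
    hp.weightedSum_mul, mul_smul_comm, smul_mul_assoc]

theorem IsProjectionPartition.exists_isProjectionPartition_twoNorm_sub_le [Nonempty ι]
    [FiniteDimensional ℂ B] (hτ : IsFaithfulTracialState τ) (hp : IsProjectionPartition p)
    (c : ι → ℝ) {k : A} (hkB : k ∈ B) (hk : IsSelfAdjoint k) :
    ∃ q : ι → A, IsProjectionPartition q ∧ (∀ i, q i ∈ B) ∧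
      twoNorm τ (weightedSum c q - weightedSum c p) ≤
        2 * Fintype.card ι ^ 2 * twoNorm τ (k - weightedSum c p) := by
  classical
  have hcont := continuousOn_real_spectrum_of_mem_finiteDimensional hkB
  choose ν hν using fun t => Finite.exists_min fun i => |c i - t|
  have hq := isProjectionPartition_cfc hk hcont ν
  refine ⟨_, hq, fun j => cfc_mem_of_finiteDimensional _ hkB, ?_⟩
  rw [mul_comm 2, mul_assoc]
  refine hq.twoNorm_le_of_forall_corner_le hτ hp fun j i => ?_
  obtain ⟨g, hg, hgeq⟩ := hp.exists_smul_cfc_mul_eq hk hcont hν i j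
  rw [hq.mul_weightedSum_sub_mul hp, hgeq]
  exact (hτ.twoNorm_mul_le_of_norm_le_one_right (hp.norm_le_one i) _).trans
    ((hτ.twoNorm_mul_le_left _ _).trans (mul_le_mul_of_nonneg_right hg (twoNorm_nonneg _)))

theorem IsProjectionPartition.twoNorm_sub_le (hτ : IsFaithfulTracialState τ)
    (hp : IsProjectionPartition p) (hq : IsProjectionPartition q)
    (hc : Pairwise fun i j => 1 ≤ |c i - c j|) (i : ι) :
    twoNorm τ (q i - p i) ≤
      Fintype.card ι ^ 2 * twoNorm τ (weightedSum c q - weightedSum c p) := by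
  classical
  refine hq.twoNorm_le_of_forall_corner_le hτ hp fun j l => ?_
  have hcorner : q j * (q i - p i) * p l =
      (if j = i then q j * p l else 0) - if i = l then q j * p l else 0 := by
    rw [mul_sub, sub_mul, hq.mul_eq, mul_assoc, hp.mul_eq]
    split_ifs <;> simp_all
  have hle : j ≠ l → twoNorm τ (q j * p l) ≤
      twoNorm τ (weightedSum c q - weightedSum c p) := fun hjl => by
    refine le_trans ?_ (hq.twoNorm_corner_le hτ hp _ j l)
    rw [hq.mul_weightedSum_sub_mul hp, twoNorm_smul, Complex.norm_real, Real.norm_eq_abs]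
    exact le_mul_of_one_le_left (twoNorm_nonneg _) (hc hjl)
  rw [hcorner]
  split_ifs with h1 h2 h2
  · simpa [twoNorm_zero] using twoNorm_nonneg _
  · simpa using hle fun h => h2 (h1 ▸ h)
  · simpa [twoNorm_neg] using hle fun h => h1 (h.trans h2.symm)
  · simpa [twoNorm_zero] using twoNorm_nonneg _

end Rounding

section Completeness

variable {A : Type*} [CStarAlgebra A] {τ : A →ₗ[ℂ] ℂ}

/-- The unit ball of `A` is complete for `‖·‖₂`; this is how `A` being a von Neumann algebra with
normal trace `τ` enters the argument. -/
def IsTwoNormComplete (τ : A →ₗ[ℂ] ℂ) : Prop :=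
  ∀ x : ℕ → A, (∀ n, ‖x n‖ ≤ 1) → (∀ δ > 0, ∃ N, ∀ n ≥ N, twoNorm τ (x n - x N) < δ) →
    ∃ y, ‖y‖ ≤ 1 ∧ Tendsto (fun n => twoNorm τ (x n - y)) atTop (𝓝 0)

theorem norm_le_one_of_mem_unitary {u : A} (hu : u ∈ unitary A) : ‖u‖ ≤ 1 := by
  nontriviality A
  exact (CStarRing.norm_of_mem_unitary hu).le

namespace IsFaithfulTracialState

variable (hτ : IsFaithfulTracialState τ)
include hτ

theorem twoNorm_mul_sub_mul_le (x y x' y' : A) :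
    twoNorm τ (x * y - x' * y') ≤ ‖x‖ * twoNorm τ (y - y') + twoNorm τ (x - x') * ‖y'‖ := by
  refine (hτ.twoNorm_sub_le _ (x * y') _).trans ?_
  rw [← mul_sub, ← sub_mul]
  exact add_le_add (hτ.twoNorm_mul_le_left _ _) (hτ.twoNorm_mul_le_right _ _)

theorem tendsto_mul {x y : ℕ → A} {a b : A} (hx1 : ∀ n, ‖x n‖ ≤ 1)
    (hx : Tendsto (fun n => twoNorm τ (x n - a)) atTop (𝓝 0))
    (hy : Tendsto (fun n => twoNorm τ (y n - b)) atTop (𝓝 0)) :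
    Tendsto (fun n => twoNorm τ (x n * y n - a * b)) atTop (𝓝 0) := by
  refine squeeze_zero (fun n => twoNorm_nonneg _) (fun n => ?_)
    (by simpa using hy.add (hx.mul_const ‖b‖))
  exact (hτ.twoNorm_mul_sub_mul_le _ _ _ _).trans
    (add_le_add_left (mul_le_of_le_one_left (twoNorm_nonneg _) (hx1 n)) _)

theorem tendsto_star {x : ℕ → A} {a : A}
    (hx : Tendsto (fun n => twoNorm τ (x n - a)) atTop (𝓝 0)) :
    Tendsto (fun n => twoNorm τ (star (x n) - star a)) atTop (𝓝 0) := by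
  simpa only [← star_sub, hτ.twoNorm_star] using hx

theorem eq_of_tendsto {x : ℕ → A} {a b : A}
    (ha : Tendsto (fun n => twoNorm τ (x n - a)) atTop (𝓝 0))
    (hb : Tendsto (fun n => twoNorm τ (x n - b)) atTop (𝓝 0)) : a = b := by
  refine sub_eq_zero.1 (hτ.twoNorm_eq_zero (le_antisymm ?_ (twoNorm_nonneg _)))
  refine ge_of_tendsto' (by simpa using ha.add hb) fun n => ?_
  simpa only [twoNorm_sub_comm a] using hτ.twoNorm_sub_le a (x n) b

theorem mem_unitary_of_tendsto {u : ℕ → A} {a : A} (hu : ∀ n, u n ∈ unitary A)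
    (h : Tendsto (fun n => twoNorm τ (u n - a)) atTop (𝓝 0)) : a ∈ unitary A := by
  have hone : Tendsto (fun _ : ℕ => twoNorm τ ((1 : A) - 1)) atTop (𝓝 0) := by simp [twoNorm_zero]
  have hnorm : ∀ n, ‖u n‖ ≤ 1 := fun n => norm_le_one_of_mem_unitary (hu n)
  refine Unitary.mem_iff.2 ⟨hτ.eq_of_tendsto ?_ hone, hτ.eq_of_tendsto ?_ hone⟩
  · simpa only [Unitary.star_mul_self_of_mem (hu _)] using
      hτ.tendsto_mul (fun n => (norm_star (u n)).trans_le (hnorm n)) (hτ.tendsto_star h) h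
  · simpa only [Unitary.mul_star_self_of_mem (hu _)] using
      hτ.tendsto_mul hnorm h (hτ.tendsto_star h)

theorem twoNorm_sub_le_of_geometric {x : ℕ → A} {K : ℝ}
    (hx : ∀ n, twoNorm τ (x (n + 1) - x n) ≤ K * 2⁻¹ ^ n) (n k : ℕ) :
    twoNorm τ (x (n + k) - x n) ≤ 2 * K * 2⁻¹ ^ n * (1 - 2⁻¹ ^ k) := by
  induction k with
  | zero => simp [twoNorm_zero]
  | succ k ih =>
    calc twoNorm τ (x (n + (k + 1)) - x n)
        ≤ K * 2⁻¹ ^ (n + k) + 2 * K * 2⁻¹ ^ n * (1 - 2⁻¹ ^ k) :=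
          (hτ.twoNorm_sub_le _ (x (n + k)) _).trans (add_le_add (hx _) ih)
      _ = 2 * K * 2⁻¹ ^ n * (1 - 2⁻¹ ^ (k + 1)) := by rw [pow_add, pow_succ]; ring

end IsFaithfulTracialState
namespace IsTwoNormComplete

theorem exists_tendsto_of_geometric (hτc : IsTwoNormComplete τ) (hτ : IsFaithfulTracialState τ)
    {x : ℕ → A} {K : ℝ} (hx1 : ∀ n, ‖x n‖ ≤ 1)
    (hx : ∀ n, twoNorm τ (x (n + 1) - x n) ≤ K * 2⁻¹ ^ n) :
    ∃ y, ‖y‖ ≤ 1 ∧ Tendsto (fun n => twoNorm τ (x n - y)) atTop (𝓝 0) := by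
  have hK : 0 ≤ K := by simpa using (twoNorm_nonneg _).trans (hx 0)
  have hlim : Tendsto (fun n : ℕ => 2 * K * 2⁻¹ ^ n) atTop (𝓝 0) := by
    simpa using (tendsto_pow_atTop_nhds_zero_of_lt_one (r := (2⁻¹ : ℝ)) (by norm_num)
      (by norm_num)).const_mul (2 * K)
  refine hτc x hx1 fun δ hδ => ?_
  obtain ⟨N, hN⟩ := (hlim.eventually_lt_const hδ).exists
  refine ⟨N, fun n hn => lt_of_le_of_lt ?_ hN⟩
  obtain ⟨k, rfl⟩ := Nat.exists_eq_add_of_le hn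
  refine (hτ.twoNorm_sub_le_of_geometric hx N k).trans (mul_le_of_le_one_right (by positivity) ?_)
  exact sub_le_self _ (by positivity)

end IsTwoNormComplete
end Completeness

section Conjugation

variable {A : Type*} [CStarAlgebra A] {τ : A →ₗ[ℂ] ℂ} {B : ℕ → StarSubalgebra ℂ A}
  {S : ℕ → Finset A} {ι : Type*} [Fintype ι] {p : ι → A} {c : ι → ℝ}

/-- The `2`-norm closure of the union of the spans of the `S n`. When `S` is the diagonal of a tower
generating `A`, this is the associated diagonal subalgebra of `A`. -/
def diagonalClosure (τ : A →ₗ[ℂ] ℂ) (S : ℕ → Finset A) : Set A :=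
  twoNormClosure τ (⋃ n, Submodule.span ℂ (S n : Set A) : Set A)

theorem IsFaithfulTracialState.exists_isSelfAdjoint_mem (hτ : IsFaithfulTracialState τ)
    (hdense : ∀ x, x ∈ twoNormClosure τ (⋃ n, B n : Set A)) {h : A} (hh : IsSelfAdjoint h)
    {δ : ℝ} (hδ : 0 < δ) : ∃ n, ∃ k ∈ B n, IsSelfAdjoint k ∧ twoNorm τ (k - h) < δ := by
  obtain ⟨a, ha, hah⟩ := hdense h δ hδ
  obtain ⟨n, han⟩ := Set.mem_iUnion.1 ha
  refine ⟨n, realPart a, realPart_mem han, (realPart a).2, ?_⟩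
  have hsplit : (realPart a : A) - h = (2⁻¹ : ℂ) • ((a - h) + star (a - h)) := by
    have h2 : h = (2⁻¹ : ℂ) • (h + h) := by rw [← two_smul ℂ h, inv_smul_smul₀ two_ne_zero]
    nth_rw 1 [h2]
    rw [realPart_apply_coe, ← Complex.coe_smul, star_sub, hh.star_eq]
    push_cast
    rw [← smul_sub, add_sub_add_comm]
  have hadd := hτ.twoNorm_add_le (a - h) (star (a - h))
  rw [hτ.twoNorm_star] at hadd
  rw [hsplit, twoNorm_smul, norm_inv, Complex.norm_ofNat]
  linarith

theorem exists_pairwise_one_le_abs_sub (ι : Type*) [Finite ι] :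
    ∃ c : ι → ℝ, Pairwise fun i j => 1 ≤ |c i - c j| := by
  obtain ⟨f, hf⟩ := exists_injective_nat ι
  refine ⟨fun i => f i, fun i j hij => ?_⟩
  have : (f i : ℤ) - f j ≠ 0 := sub_ne_zero.2 (Nat.cast_injective.ne (hf.ne hij))
  have := Int.one_le_abs this
  dsimp only
  exact_mod_cast this

omit [Fintype ι] in
theorem injective_of_pairwise_one_le_abs_sub (hc : Pairwise fun i j => 1 ≤ |c i - c j|) :
    Function.Injective c := fun i j hij => by
  by_contra h
  have := hc h
  norm_num [hij] at this

/-- The element `∑ᵢ cᵢ pᵢ` is within `δ` in `‖·‖₂` of an element `∑ᵢ cᵢ rᵢ` whose partition `r`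
lies in the diagonal of a tower. -/
def IsAlmostDiagonal (τ : A →ₗ[ℂ] ℂ) (S : ℕ → Finset A) (c : ι → ℝ) (δ : ℝ) (p : ι → A) : Prop :=
  ∃ m, ∃ r : ι → A, IsProjectionPartition r ∧ (∀ i, r i ∈ Submodule.span ℂ (S m : Set A)) ∧
    twoNorm τ (weightedSum c p - weightedSum c r) ≤ δ

namespace IsDiagonalTower

variable (hS : IsDiagonalTower B S) (hτ : IsFaithfulTracialState τ)
  [∀ n, FiniteDimensional ℂ (B n)] (hB : Monotone B)
  (hdense : ∀ x, x ∈ twoNormClosure τ (⋃ n, B n : Set A)) (hp : IsProjectionPartition p)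
include hS hτ hB hdense hp

/-- Approximate the `pᵢ` by a partition `p'` in some `B m`, rotate `p'` into the diagonal by a
unitary `w` of `B m`, and replace `w` by a unitary with the same effect on `p'` near `1`. -/
theorem exists_unitary_isAlmostDiagonal [Nonempty ι]
    (hc : Pairwise fun i j => 1 ≤ |c i - c j|) {n : ℕ} {d : A}
    (hdS : d ∈ Submodule.span ℂ (S n : Set A)) (hd : IsSelfAdjoint d) {δ : ℝ} (hδ : 0 < δ) :
    ∃ v ∈ unitary A, IsAlmostDiagonal τ S c δ (fun i => v * p i * star v) ∧
      twoNorm τ (v - 1) ≤ 4 * Fintype.card ι ^ 2 * (twoNorm τ (weightedSum c p - d) + δ) := by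
  have hcinj := injective_of_pairwise_one_le_abs_sub hc
  have hK : (0 : ℝ) < 2 * Fintype.card ι ^ 2 := by
    have : 0 < Fintype.card ι := Fintype.card_pos
    positivity
  obtain ⟨l, k, hkl, hk, hkp⟩ := hτ.exists_isSelfAdjoint_mem hdense
    (hp.isSelfAdjoint_weightedSum c) (div_pos hδ hK)
  let m := max n l
  obtain ⟨p', hp', hp'B, hle⟩ :=
    hp.exists_isProjectionPartition_twoNorm_sub_le hτ c (hB (le_max_right n l) hkl) hk
  replace hle : twoNorm τ (weightedSum c p' - weightedSum c p) ≤ δ :=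
    hle.trans ((le_div_iff₀' hK).1 hkp.le)
  obtain ⟨w, hwB, hw, hwS, hwd⟩ := (hS.partition m).exists_unitary_conj_mem_span hτ
    (weightedSum_mem hp'B) (hp'.isSelfAdjoint_weightedSum c)
    (hS.monotone_span (le_max_left n l) hdS) hd
  obtain ⟨v, hv, hvw, hv1⟩ := hp'.exists_unitary_conj_eq_twoNorm_sub_one_le hτ hp'B hc hwB hw
  refine ⟨v, hv, ⟨m, fun i => w * p' i * star w, hp'.conj hw, ?_, ?_⟩, ?_⟩
  · refine (hS.partition m).mem_span_of_weightedSum_mem_span (hp'.conj hw)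
      (fun i => mul_mem (mul_mem hwB (hp'B i)) (star_mem hwB)) hcinj ?_
    rwa [weightedSum_conj]
  · rw [← funext hvw, weightedSum_conj, weightedSum_conj, ← sub_mul, ← mul_sub,
      hτ.twoNorm_mul_unitary (Unitary.star_mem hv), twoNorm_unitary_mul hv, twoNorm_sub_comm]
    exact hle
  · have h1 := hτ.twoNorm_sub_le (w * weightedSum c p' * star w) d (weightedSum c p')
    have h2 := hτ.twoNorm_sub_le (weightedSum c p') (weightedSum c p) d
    rw [twoNorm_sub_comm d] at h1
    calc twoNorm τ (v - 1) ≤ _ := hv1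
      _ ≤ 2 * Fintype.card ι ^ 2 * (2 * (twoNorm τ (weightedSum c p - d) + δ)) :=
        mul_le_mul_of_nonneg_left (by linarith) hK.le
      _ = _ := by ring

theorem exists_seq_unitary_isAlmostDiagonal [Nonempty ι]
    (hc : Pairwise fun i j => 1 ≤ |c i - c j|) :
    ∃ u : ℕ → A, (∀ n, u n ∈ unitary A) ∧
      (∀ n, IsAlmostDiagonal τ S c (2⁻¹ ^ n) (fun i => u n * p i * star (u n))) ∧
      ∀ n, twoNorm τ (u (n + 1) - u n) ≤ 8 * Fintype.card ι ^ 2 * 2⁻¹ ^ n := by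
  let P : ℕ → A → Prop := fun n u => u ∈ unitary A ∧
    IsAlmostDiagonal τ S c (2⁻¹ ^ n) (fun i => u * p i * star u)
  have hstep : ∀ n u, P n u → ∃ u', P (n + 1) u' ∧
      twoNorm τ (u' - u) ≤ 8 * Fintype.card ι ^ 2 * 2⁻¹ ^ n := by
    rintro n u ⟨hu, m, r, hr, hrS, hle⟩
    obtain ⟨v, hv, hdiag, hv1⟩ := hS.exists_unitary_isAlmostDiagonal hτ hB hdense (hp.conj hu) hc
      (weightedSum_mem_submodule hrS) (hr.isSelfAdjoint_weightedSum c)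
      (show (0 : ℝ) < 2⁻¹ ^ (n + 1) by positivity)
    refine ⟨v * u, ⟨mul_mem hv hu, by simpa only [star_mul, mul_assoc] using hdiag⟩, ?_⟩
    rw [← sub_one_mul, hτ.twoNorm_mul_unitary hu]
    calc twoNorm τ (v - 1) ≤ _ := hv1
      _ ≤ 4 * Fintype.card ι ^ 2 * (2 * 2⁻¹ ^ n) := by
        gcongr
        rw [pow_succ]
        linarith [show (0 : ℝ) < 2⁻¹ ^ n by positivity]
      _ = _ := by ring
  obtain ⟨u₀, hu₀, hdiag, -⟩ := hS.exists_unitary_isAlmostDiagonal hτ hB hdense hp hc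
    (n := 0) (zero_mem _) (.zero A) one_pos
  obtain ⟨u, hu, hle⟩ :=
    exists_seq_of_forall_exists ⟨u₀, hu₀, by simpa only [pow_zero] using hdiag⟩ hstep
  exact ⟨u, fun n => (hu n).1, fun n => (hu n).2, hle⟩

theorem exists_unitary_conj_mem_diagonalClosure (hτc : IsTwoNormComplete τ) :
    ∃ u ∈ unitary A, ∀ i, u * p i * star u ∈ diagonalClosure τ S := by
  obtain hι | hι := isEmpty_or_nonempty ι
  · exact ⟨1, one_mem _, isEmptyElim⟩
  obtain ⟨c, hc⟩ := exists_pairwise_one_le_abs_sub ι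
  obtain ⟨u, hu, hdiag, hle⟩ := hS.exists_seq_unitary_isAlmostDiagonal hτ hB hdense hp hc
  have hnorm := fun n => norm_le_one_of_mem_unitary (hu n)
  obtain ⟨v, -, hv⟩ := hτc.exists_tendsto_of_geometric hτ hnorm hle
  refine ⟨v, hτ.mem_unitary_of_tendsto hu hv, fun i δ hδ => ?_⟩
  have hconj : Tendsto (fun n => twoNorm τ (u n * p i * star (u n) - v * p i * star v))
      atTop (𝓝 0) := by
    refine hτ.tendsto_mul (fun n => ?_) (hτ.tendsto_mul hnorm hv ?_) (hτ.tendsto_star hv)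
    · exact (norm_mul_le _ _).trans (mul_le_one₀ (hnorm n) (norm_nonneg _) (hp.norm_le_one i))
    · simp [twoNorm_zero]
  have hpow : Tendsto (fun n : ℕ => (Fintype.card ι : ℝ) ^ 2 * 2⁻¹ ^ n) atTop (𝓝 0) := by
    simpa using (tendsto_pow_atTop_nhds_zero_of_lt_one (r := (2⁻¹ : ℝ)) (by norm_num)
      (by norm_num)).const_mul ((Fintype.card ι : ℝ) ^ 2)
  obtain ⟨n, hn⟩ := ((hpow.add hconj).eventually_lt_const (by rwa [add_zero])).exists
  obtain ⟨m, r, hr, hrS, hrle⟩ := hdiag n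
  refine ⟨r i, Set.mem_iUnion.2 ⟨m, hrS i⟩, lt_of_le_of_lt ?_ hn⟩
  refine (hτ.twoNorm_sub_le _ (u n * p i * star (u n)) _).trans (add_le_add_left ?_ _)
  rw [twoNorm_sub_comm]
  exact (hr.twoNorm_sub_le hτ (hp.conj (hu n)) hc i).trans
    (mul_le_mul_of_nonneg_left hrle (sq_nonneg _))

end IsDiagonalTower
end Conjugation

section Adjoin

variable {A : Type*} [CStarAlgebra A] {τ : A →ₗ[ℂ] ℂ}

theorem finiteDimensional_adjoin_insert {B : StarSubalgebra ℂ A} [FiniteDimensional ℂ B] {z : A}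
    (hz : IsStarProjection z) (hzB : z ∈ StarSubalgebra.centralizer ℂ (B : Set A)) :
    FiniteDimensional ℂ (StarAlgebra.adjoin ℂ (insert z (B : Set A))) := by
  have hcomm := mem_centralizer_iff_commute.1 hzB
  let f : B × B →ₗ[ℂ] A := B.subtype.toLinearMap.coprod
    (LinearMap.mulRight ℂ z ∘ₗ B.subtype.toLinearMap)
  have hf : ∀ c ∈ B, ∀ d ∈ B, c + d * z ∈ LinearMap.range f := fun c hc d hd =>
    ⟨(⟨c, hc⟩, ⟨d, hd⟩), by simp [f]⟩
  have hle : (StarAlgebra.adjoin ℂ (insert z (B : Set A))).toSubalgebra.toSubmodule ≤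
      LinearMap.range f := by
    intro x hx
    induction hx using StarAlgebra.adjoin_induction with
    | mem x hx =>
      obtain rfl | hx := hx
      · simpa using hf 0 (zero_mem B) 1 (one_mem B)
      · simpa using hf x hx 0 (zero_mem B)
    | algebraMap r => simpa using hf _ (algebraMap_mem B r) 0 (zero_mem B)
    | add x y _ _ hx hy => exact add_mem hx hy
    | mul x y _ _ hx hy =>
      obtain ⟨⟨⟨c, hc⟩, ⟨d, hd⟩⟩, rfl⟩ := hx
      obtain ⟨⟨⟨c', hc'⟩, ⟨d', hd'⟩⟩, rfl⟩ := hy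
      have hmul : (c + d * z) * (c' + d' * z) = c * c' + (c * d' + d * c' + d * d') * z := by
        simp only [add_mul, mul_add, mul_assoc, ← (hcomm c' hc').eq]
        rw [← mul_assoc z d', ← (hcomm d' hd').eq, mul_assoc d', hz.isIdempotentElem.eq]
        abel
      simpa [f, hmul] using hf _ (mul_mem hc hc') _
        (add_mem (add_mem (mul_mem hc hd') (mul_mem hd hc')) (mul_mem hd hd'))
    | star x _ hx =>
      obtain ⟨⟨⟨c, hc⟩, ⟨d, hd⟩⟩, rfl⟩ := hx
      simpa [f, hz.isSelfAdjoint.star_eq, ← (hcomm _ (star_mem hd)).eq] using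
        hf _ (star_mem hc) _ (star_mem hd)
  exact Submodule.finiteDimensional_of_le hle

theorem finiteDimensional_adjoin_union {B : StarSubalgebra ℂ A} [FiniteDimensional ℂ B]
    {T : Set A} (hT : T.Finite) (hproj : ∀ z ∈ T, IsStarProjection z)
    (hTB : ∀ z ∈ T, z ∈ StarSubalgebra.centralizer ℂ (B : Set A))
    (hcomm : ∀ z ∈ T, ∀ w ∈ T, Commute z w) :
    FiniteDimensional ℂ (StarAlgebra.adjoin ℂ ((B : Set A) ∪ T)) := by
  induction T, hT using Set.Finite.induction_on with
  | empty =>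
    exact finiteDimensional_of_le_starSubalgebra (B := B)
      (StarAlgebra.adjoin_le (by rw [Set.union_empty]))
  | @insert z T _ _ ih =>
    simp only [Set.forall_mem_insert] at hproj hTB hcomm
    have := ih hproj.2 hTB.2 fun w hw w' hw' => (hcomm.2 w hw).2 w' hw'
    have hz : StarAlgebra.adjoin ℂ ((B : Set A) ∪ T) ≤ StarSubalgebra.centralizer ℂ {z} := by
      refine StarAlgebra.adjoin_le fun x hx => (StarSubalgebra.mem_centralizer_iff ℂ).2 ?_
      rintro _ rfl
      rw [hproj.1.isSelfAdjoint.star_eq, and_self]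
      obtain hx | hx := hx
      · exact (mem_centralizer_iff_commute.1 hTB.1 x hx).eq.symm
      · exact (hcomm.1.2 x hx).eq
    have := finiteDimensional_adjoin_insert hproj.1 (mem_centralizer_iff_commute.2 fun x hx =>
      (((StarSubalgebra.mem_centralizer_iff ℂ).1 (hz hx) z rfl).1).symm)
    refine finiteDimensional_of_le_starSubalgebra (StarAlgebra.adjoin_le ?_)
      (B := StarAlgebra.adjoin ℂ (insert z (StarAlgebra.adjoin ℂ ((B : Set A) ∪ T) : Set A)))
    rw [Set.union_insert]
    exact (Set.insert_subset_insert (StarAlgebra.subset_adjoin ℂ _)).trans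
      (StarAlgebra.subset_adjoin ℂ _)

theorem subset_diagonalClosure {S : ℕ → Finset A} (n : ℕ) :
    (S n : Set A) ⊆ diagonalClosure τ S := fun x hx _ hδ =>
  ⟨x, Set.mem_iUnion.2 ⟨n, Submodule.subset_span hx⟩, by rwa [sub_self, twoNorm_zero]⟩

namespace IsDiagonalTower

variable {B : ℕ → StarSubalgebra ℂ A} {S : ℕ → Finset A} (hS : IsDiagonalTower B S)
include hS

variable (hτ : IsFaithfulTracialState τ)
include hτ

theorem commute_of_mem_diagonalClosure {x y : A} (hx : x ∈ diagonalClosure τ S)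
    (hy : y ∈ diagonalClosure τ S) : Commute x y := by
  refine hτ.commute_of_mem_twoNormClosure (fun a ha => ?_) hy
  refine (hτ.commute_of_mem_twoNormClosure (fun b hb => ?_) hx).symm
  obtain ⟨n, ha⟩ := Set.mem_iUnion.1 ha
  obtain ⟨m, hb⟩ := Set.mem_iUnion.1 hb
  exact (hS.partition (max n m)).commute_of_mem_span
    (hS.monotone_span (le_max_left n m) ha) (hS.monotone_span (le_max_right n m) hb)

variable {n : ℕ} {e : A} (he : e ∈ S n) {κ : Type*} [Fintype κ] {b : κ → A}
  (hb : IsTraceBasis τ (B n) b)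
include he hb

theorem isStarProjection_cornerLift_mul {q : A} (hq : IsStarProjection q)
    (hqd : q ∈ diagonalClosure τ S) : IsStarProjection (cornerLift τ b e (q * e)) := by
  have hmin := (hS.partition n).minimal e he
  have hee := hmin.isStarProjection.isIdempotentElem.eq
  have hqe := hS.commute_of_mem_diagonalClosure hτ hqd
    (subset_diagonalClosure n he)
  have hproj := hq.mul hmin.isStarProjection hqe
  refine ⟨?_, ?_⟩
  · rw [IsIdempotentElem, hb.cornerLift_mul_cornerLift hτ hmin (by rw [mul_assoc, hee])
      (by rw [hqe.eq, ← mul_assoc, hee]), hproj.isIdempotentElem.eq]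
    rw [mul_assoc, hee]
  · rw [IsSelfAdjoint, star_cornerLift, hproj.isSelfAdjoint.star_eq]
    rw [← hτ.map_star, hmin.isStarProjection.isSelfAdjoint.star_eq]

theorem cornerLift_mul_mem_diagonalClosure (hB : Monotone B) {x : A}
    (hx : x ∈ diagonalClosure τ S) : cornerLift τ b e (x * e) ∈ diagonalClosure τ S := by
  refine hτ.map_mem_twoNormClosure (f := cornerLift τ b e ∘ₗ LinearMap.mulRight ℂ e)
    (K := ‖τ e‖ * ((∑ k, ‖b k‖ * ‖star (b k)‖) * ‖e‖)) (fun y => ?_) (fun y hy => ?_) hx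
  · refine (twoNorm_smul _ _).le.trans ?_
    rw [mul_assoc, mul_assoc, mul_comm ‖e‖]
    exact mul_le_mul_of_nonneg_left ((hτ.twoNorm_averaging_le b (y * e)).trans
      (mul_le_mul_of_nonneg_left (hτ.twoNorm_mul_le_right _ _) (by positivity))) (norm_nonneg _)
  · obtain ⟨m, hy⟩ := Set.mem_iUnion.1 hy
    obtain ⟨w, hw, hwB, hyw⟩ := hS.exists_mul_eq_mul hB (le_max_left n m) he
      (hS.monotone_span (le_max_right n m) hy)
    have heB := ((hS.partition n).minimal e he).mem
    have hlift : cornerLift τ b e e ∈ Submodule.span ℂ (S n : Set A) :=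
      (hS.partition n).mem_span_of_forall_commute (hb.cornerLift_mem le_rfl heB) fun f hf =>
        (mem_centralizer_iff_commute.1 (hb.cornerLift_mem_centralizer hτ) f
          ((hS.partition n).minimal f hf).mem).symm
    refine Set.mem_iUnion.2 ⟨max n m, ?_⟩
    have heq : cornerLift τ b e (y * e) = cornerLift τ b e e * w := by
      rw [hyw, ← (mem_centralizer_iff_commute.1 hwB e heB).eq]
      simp only [cornerLift, LinearMap.smul_apply, hb.averaging_mul hwB, smul_mul_assoc]
    change cornerLift τ b e (y * e) ∈ _
    rw [heq]
    exact (hS.partition _).mul_mem_span (hS.monotone_span (le_max_left n m) hlift) hw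

end IsDiagonalTower

theorem IsDiagonalTower.finiteDimensional_adjoin {B : ℕ → StarSubalgebra ℂ A} {S : ℕ → Finset A}
    [∀ n, FiniteDimensional ℂ (B n)] (hS : IsDiagonalTower B S) (hτ : IsFaithfulTracialState τ)
    (hB : Monotone B) {ι : Type*} [Finite ι] {q : ι → A} (hq : ∀ i, IsStarProjection (q i))
    (hqd : ∀ i, q i ∈ diagonalClosure τ S) (n : ℕ) :
    FiniteDimensional ℂ (StarAlgebra.adjoin ℂ ((B n : Set A) ∪ Set.range q)) := by
  obtain ⟨_, b, hb⟩ := hτ.exists_isTraceBasis (B n)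
  let z : ι × S n → A := fun x => cornerLift τ b x.2 (q x.1 * x.2)
  have hfin : FiniteDimensional ℂ (StarAlgebra.adjoin ℂ ((B n : Set A) ∪ Set.range z)) := by
    refine finiteDimensional_adjoin_union (Set.finite_range z) ?_ ?_ ?_ <;>
      simp only [Set.forall_mem_range]
    · exact fun x => hS.isStarProjection_cornerLift_mul hτ x.2.2 hb (hq x.1) (hqd x.1)
    · exact fun x => hb.cornerLift_mem_centralizer hτ
    · exact fun x y => hS.commute_of_mem_diagonalClosure hτ
        (hS.cornerLift_mul_mem_diagonalClosure hτ x.2.2 hb hB (hqd x.1))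
        (hS.cornerLift_mul_mem_diagonalClosure hτ y.2.2 hb hB (hqd y.1))
  refine finiteDimensional_of_le_starSubalgebra
    (B := StarAlgebra.adjoin ℂ ((B n : Set A) ∪ Set.range z)) (StarAlgebra.adjoin_le
      (Set.union_subset (Set.subset_union_left.trans (StarAlgebra.subset_adjoin ℂ _)) ?_))
  rintro _ ⟨i, rfl⟩
  have hsum : q i = ∑ e : S n, z (i, e) * e := by
    have hz : ∀ e : S n, z (i, e) * e = q i * e := fun e => by
      have hmin := (hS.partition n).minimal e e.2
      have hee := hmin.isStarProjection.isIdempotentElem.eq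
      have hqe := hS.commute_of_mem_diagonalClosure hτ (hqd i)
        (subset_diagonalClosure n e.2)
      exact hb.cornerLift_mul hτ hmin (by rw [hqe.eq, ← mul_assoc, hee]) (by rw [mul_assoc, hee])
    rw [Finset.sum_congr rfl fun e _ => hz e, ← Finset.mul_sum,
      Finset.sum_coe_sort (S n) (fun e => e), (hS.partition n).sum_eq, mul_one]
  rw [hsum, SetLike.mem_coe]
  exact sum_mem fun e _ => mul_mem (StarAlgebra.subset_adjoin ℂ _ (.inr ⟨_, rfl⟩))
    (StarAlgebra.subset_adjoin ℂ _ (.inl ((hS.partition n).minimal e e.2).mem))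

end Adjoin

section SmallTrace

variable {A : Type*} [CStarAlgebra A] {τ : A →ₗ[ℂ] ℂ}

theorem IsTwoNormComplete.exists_tendsto_of_mul_eq (hτc : IsTwoNormComplete τ)
    (hτ : IsFaithfulTracialState τ) {e : ℕ → A} (he : ∀ n, IsStarProjection (e n))
    (hmul : ∀ n m, n ≤ m → e n * e m = e m) :
    ∃ f, IsStarProjection f ∧ (∀ n, e n * f = f) ∧
      Tendsto (fun n => twoNorm τ (e n - f)) atTop (𝓝 0) := by
  have hsub : ∀ n m, n ≤ m → IsStarProjection (e n - e m) := fun n m h =>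
    (he m).sub_of_mul_eq_right (he n) (hmul n m h)
  have hanti : Antitone fun n => (τ (e n)).re := fun n m h => by
    simpa [map_sub] using hτ.re_map_nonneg (hsub n m h)
  have hlim := tendsto_atTop_ciInf hanti
    ⟨0, Set.forall_mem_range.2 fun n => hτ.re_map_nonneg (he n)⟩
  have hnorm := fun n => (he n).norm_le _
  obtain ⟨f, -, hf⟩ := hτc e hnorm fun δ hδ => by
    obtain ⟨N, hN⟩ := Metric.cauchySeq_iff'.1 hlim.cauchySeq (δ ^ 2) (by positivity)
    refine ⟨N, fun n hn => lt_of_pow_lt_pow_left₀ 2 hδ.le ?_⟩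
    rw [twoNorm_sub_comm, hτ.twoNorm_sq_of_isStarProjection (hsub N n hn), map_sub, Complex.sub_re]
    exact (le_abs_self _).trans_lt (by simpa [Real.dist_eq, abs_sub_comm] using hN n hn)
  have hmul_tendsto := hτ.tendsto_mul hnorm hf hf
  refine ⟨f, ⟨hτ.eq_of_tendsto hmul_tendsto ?_, hτ.eq_of_tendsto (hτ.tendsto_star hf) ?_⟩,
    fun n => ?_, hf⟩
  · simpa only [(he _).isIdempotentElem.eq] using hf
  · simpa only [(he _).isSelfAdjoint.star_eq] using hf
  · have hconst : Tendsto (fun _ : ℕ => twoNorm τ (e n - e n)) atTop (𝓝 0) := by simp [twoNorm_zero]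
    refine hτ.eq_of_tendsto (hτ.tendsto_mul (fun _ => hnorm n) hconst hf) (hf.congr' ?_)
    filter_upwards [eventually_ge_atTop n] with m hm
    rw [hmul n m hm]

theorem IsFaithfulTracialState.isMinimalProjection_top_of_dense (hτ : IsFaithfulTracialState τ)
    {s : Set A} (hdense : ∀ x, x ∈ twoNormClosure τ s) {f : A} (hf : IsStarProjection f)
    (h0 : f ≠ 0) (hs : ∀ x ∈ s, ∃ c : ℂ, f * x * f = c • f) :
    IsMinimalProjection (⊤ : StarSubalgebra ℂ A) f := by
  have hnorm := hf.norm_le _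
  let g : A →ₗ[ℂ] A := LinearMap.mulLeftRight ℂ (f, f)
  have hg : ∀ x, twoNorm τ (g x) ≤ twoNorm τ x := fun x =>
    (hτ.twoNorm_mul_le_of_norm_le_one_right hnorm _).trans
      (hτ.twoNorm_mul_le_of_norm_le_one_left hnorm _)
  let φ : A →ₗ[ℂ] A := g - (τ f)⁻¹ • (τ ∘ₗ g).smulRight f
  refine ⟨StarSubalgebra.mem_top, hf, h0, fun x _ => ⟨(τ f)⁻¹ * τ (g x), ?_⟩⟩
  have hφ : φ x = 0 := by
    refine hτ.eq_zero_of_mem_twoNormClosure (K := 1 + ‖(τ f)⁻¹‖ * twoNorm τ f) (fun y => ?_)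
      (fun y hy => ?_) (hdense x)
    · calc twoNorm τ (φ y) ≤ twoNorm τ (g y) + twoNorm τ ((τ f)⁻¹ • τ (g y) • f) := by
            simpa [φ, sub_eq_add_neg, twoNorm_neg] using
              hτ.twoNorm_add_le (g y) (-((τ f)⁻¹ • τ (g y) • f))
        _ ≤ twoNorm τ y + ‖(τ f)⁻¹‖ * (twoNorm τ y * twoNorm τ f) := by
            rw [twoNorm_smul, twoNorm_smul]
            gcongr
            exacts [hg y, twoNorm_nonneg _, (hτ.norm_map_le _).trans (hg y)]
        _ = _ := by ring
    · obtain ⟨c, hc⟩ := hs y hy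
      simp [φ, g, hc, smul_smul, mul_comm c, hτ.map_ne_zero hf h0]
  simpa [φ, g, smul_smul, sub_eq_zero] using hφ

theorem IsMinimalPartition.exists_re_map_le {B C : StarSubalgebra ℂ A} {S : Finset A}
    (hS : IsMinimalPartition B 1 S) (hτ : IsFaithfulTracialState τ) (hBC : B ≤ C) {f : A}
    (hf : IsMinimalProjection C f) : ∃ e ∈ S, (τ f).re ≤ (τ e).re := by
  obtain ⟨e, he, hef⟩ : ∃ e ∈ S, e * f ≠ 0 := by
    by_contra! h
    exact hf.ne_zero (by rw [← one_mul f, ← hS.sum_eq, Finset.sum_mul, Finset.sum_eq_zero h])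
  exact ⟨e, he, hτ.re_map_le_of_mul_ne_zero hf (hBC (hS.minimal e he).mem)
    (hS.minimal e he).isStarProjection hef⟩

namespace IsDiagonalTower

variable {B : ℕ → StarSubalgebra ℂ A} {S : ℕ → Finset A} (hS : IsDiagonalTower B S)
include hS

theorem exists_mul_eq_self_of_le {n m : ℕ} (hnm : n ≤ m) {f : A} (hf : f ∈ S m) :
    ∃ e ∈ S n, e * f = f := by
  induction m, hnm using Nat.le_induction generalizing f with
  | base => exact ⟨f, hf, ((hS.partition n).minimal f hf).isStarProjection.isIdempotentElem.eq⟩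
  | succ m _ ih =>
    obtain ⟨g, hg, hgf⟩ := hS.exists_mul_eq_self hf
    obtain ⟨e, he, heg⟩ := ih hg
    exact ⟨e, he, by rw [← hgf, ← mul_assoc, heg]⟩

theorem eq_of_mul_eq_self {n : ℕ} {e e' f : A} (he : e ∈ S n) (he' : e' ∈ S n) (hf : f ≠ 0)
    (hef : e * f = f) (hef' : e' * f = f) : e = e' := by
  by_contra h
  exact hf (by rw [← hef, ← hef', ← mul_assoc, (hS.partition n).orth e he e' he' h, zero_mul])

theorem exists_chain_of_forall_exists {P : A → Prop}
    (hP : ∀ n m, n ≤ m → ∀ e ∈ S n, ∀ f ∈ S m, e * f = f → P f → P e)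
    (hex : ∀ n, ∃ e ∈ S n, P e) :
    ∃ e : ℕ → A, (∀ n, e n ∈ S n ∧ P (e n)) ∧ ∀ n m, n ≤ m → e n * e m = e m := by
  let α : ℕ → Type _ := fun n => {e : A // e ∈ S n ∧ P e}
  have hfin : ∀ n, Finite (α n) := fun n =>
    (S n).finite_toSet.subset fun _ => And.left
  have hne : ∀ n, Nonempty (α n) := fun n => let ⟨e, he⟩ := hex n; ⟨e, he⟩
  have hanc : ∀ {n m : ℕ} (_ : n ≤ m) (f : α m), ∃ e : α n, e.1 * f.1 = f.1 := fun hnm f => by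
    obtain ⟨e, he, hef⟩ := hS.exists_mul_eq_self_of_le hnm f.2.1
    exact ⟨⟨e, he, hP _ _ hnm e he f f.2.1 hef f.2.2⟩, hef⟩
  choose π hπ using @hanc
  have huniq : ∀ {n m : ℕ} (e e' : α n) (f : α m), e.1 * f.1 = f.1 → e'.1 * f.1 = f.1 → e = e' :=
    fun e e' f h h' => Subtype.ext (hS.eq_of_mul_eq_self e.2.1 e'.2.1
      ((hS.partition _).minimal f f.2.1).ne_zero h h')
  obtain ⟨e, he⟩ := exists_seq_forall_proj_of_forall_finite (fun hnm => π hnm)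
    (fun n f => huniq _ _ f (hπ le_rfl f)
      ((hS.partition n).minimal f f.2.1).isStarProjection.isIdempotentElem.eq)
    (fun i j k hij hjk f => huniq _ _ f
      (by rw [← hπ hjk f, ← mul_assoc, hπ hij]) (hπ (hij.trans hjk) f))
    fun _ _ => Set.toFinite _
  exact ⟨fun n => e n, fun n => (e n).2, fun n m hnm => by
    simpa only [he hnm] using hπ hnm (e m)⟩

/-- Otherwise König's lemma provides a decreasing sequence of minimal projections of the `B n` with
traces at least `ε`, whose limit would be a minimal projection of `A`. -/
theorem exists_forall_re_map_lt (hτ : IsFaithfulTracialState τ) (hτc : IsTwoNormComplete τ)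
    (hdense : ∀ x, x ∈ twoNormClosure τ (⋃ n, B n : Set A))
    (hdiffuse : ∀ f, ¬ IsMinimalProjection (⊤ : StarSubalgebra ℂ A) f) {ε : ℝ} (hε : 0 < ε) :
    ∃ N, ∀ n ≥ N, ∀ e ∈ S n, (τ e).re < ε := by
  have hproj : ∀ {n : ℕ} {e : A}, e ∈ S n → IsStarProjection e := fun he =>
    ((hS.partition _).minimal _ he).isStarProjection
  have hanti : ∀ n m, n ≤ m → ∀ e ∈ S n, ∀ f ∈ S m, e * f = f → ε ≤ (τ f).re → ε ≤ (τ e).re := by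
    intro n m _ e he f hf hef hle
    have h := hτ.re_map_nonneg ((hproj hf).sub_of_mul_eq_right (hproj he) hef)
    rw [map_sub, Complex.sub_re] at h
    linarith
  by_contra! hcon
  obtain ⟨e, he, hmul⟩ := hS.exists_chain_of_forall_exists hanti fun n => by
    obtain ⟨m, hnm, f, hf, hle⟩ := hcon n
    obtain ⟨e, he, hef⟩ := hS.exists_mul_eq_self_of_le hnm hf
    exact ⟨e, he, hanti n m hnm e he f hf hef hle⟩
  obtain ⟨f, hf, hef, hlim⟩ := hτc.exists_tendsto_of_mul_eq hτ (fun n => hproj (he n).1) hmul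
  have hf0 : f ≠ 0 := by
    rintro rfl
    have hle : ∀ n, √ε ≤ twoNorm τ (e n - 0) := fun n => by
      refine Real.sqrt_le_iff.2 ⟨twoNorm_nonneg _, ?_⟩
      rw [sub_zero, hτ.twoNorm_sq_of_isStarProjection (hproj (he n).1)]
      exact (he n).2
    exact (ge_of_tendsto' hlim hle).not_gt (Real.sqrt_pos.2 hε)
  refine hdiffuse f (hτ.isMinimalProjection_top_of_dense hdense hf hf0 fun x hx => ?_)
  obtain ⟨n, hx⟩ := Set.mem_iUnion.1 hx
  obtain ⟨c, hc⟩ := ((hS.partition n).minimal (e n) (he n).1).exists_eq_smul x hx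
  have hfe := mul_eq_of_star_mul_eq (hproj (he n).1).isSelfAdjoint hf.isSelfAdjoint (hef n)
  refine ⟨c, ?_⟩
  calc f * x * f = f * (e n * x * e n) * f := by
        simp only [← mul_assoc, hfe, mul_assoc _ (e n) f, hef n]
    _ = c • f := by rw [hc, mul_smul_comm, smul_mul_assoc, hfe, hf.isIdempotentElem.eq]

end IsDiagonalTower
end SmallTrace

section Transport

variable {A A' : Type*} [CStarAlgebra A] [CStarAlgebra A']

theorem finiteDimensional_comap {φ : A →⋆ₐ[ℂ] A'} (hφ : Function.Injective φ)
    (B : StarSubalgebra ℂ A') [FiniteDimensional ℂ B] : FiniteDimensional ℂ (B.comap φ) :=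
  FiniteDimensional.of_injective
    (φ.toLinearMap.restrict (p := (B.comap φ).toSubalgebra.toSubmodule)
      (q := B.toSubalgebra.toSubmodule) fun _ hx => hx)
    fun _ _ h => Subtype.ext (hφ (congrArg Subtype.val h))

theorem finiteDimensional_map (φ : A →⋆ₐ[ℂ] A') (B : StarSubalgebra ℂ A) [FiniteDimensional ℂ B] :
    FiniteDimensional ℂ (B.map φ) :=
  inferInstanceAs (FiniteDimensional ℂ (B.toSubalgebra.toSubmodule.map φ.toLinearMap))

theorem IsMinimalProjection.map_of_comap (φ : A ≃⋆ₐ[ℂ] A') {C : StarSubalgebra ℂ A'} {f : A}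
    (hf : IsMinimalProjection (C.comap (φ : A →⋆ₐ[ℂ] A')) f) : IsMinimalProjection C (φ f) where
  mem := hf.mem
  isStarProjection := hf.isStarProjection.map φ
  ne_zero := (map_ne_zero_iff φ φ.injective).2 hf.ne_zero
  exists_eq_smul x hx := by
    obtain ⟨y, rfl⟩ : ∃ y, φ y = x := EquivLike.surjective φ x
    obtain ⟨c, hc⟩ := hf.exists_eq_smul y hx
    exact ⟨c, by rw [← map_mul, ← map_mul, hc, map_smul]⟩

theorem IsMinimalProjection.of_map {φ : A →⋆ₐ[ℂ] A'} (hφ : Function.Injective φ)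
    {B : StarSubalgebra ℂ A} {e : A} (he : e ∈ B) (h : IsMinimalProjection (B.map φ) (φ e)) :
    IsMinimalProjection B e where
  mem := he
  isStarProjection :=
    ⟨hφ ((map_mul φ e e).trans h.isStarProjection.isIdempotentElem),
      hφ ((map_star φ e).trans h.isStarProjection.isSelfAdjoint)⟩
  ne_zero := (map_ne_zero_iff φ hφ).1 h.ne_zero
  exists_eq_smul x hx := by
    obtain ⟨c, hc⟩ := h.exists_eq_smul (φ x) ⟨x, hx, rfl⟩
    exact ⟨c, hφ (by rw [map_mul, map_mul, hc, map_smul])⟩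

end Transport

section Chain

variable {A : Type*} [CStarAlgebra A] {τ : A →ₗ[ℂ] ℂ} {B : ℕ → StarSubalgebra ℂ A}

theorem exists_isMinimalPartition_le_span {D : StarSubalgebra ℂ A} [FiniteDimensional ℂ D]
    (hD : ∀ x ∈ D, ∀ y ∈ D, Commute x y) :
    ∃ S, IsMinimalPartition D 1 S ∧
      D.toSubalgebra.toSubmodule ≤ Submodule.span ℂ (S : Set A) := by
  obtain ⟨S, hS⟩ := exists_isMinimalPartition (one_mem D) (.one A)
  exact ⟨S, hS, fun x hx =>
    hS.mem_span_of_forall_commute hx fun e he => hD x hx e (hS.minimal e he).mem⟩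

theorem IsFaithfulTracialState.exists_monotone_finiteDimensional_re_map_lt
    (hτ : IsFaithfulTracialState τ) (hτc : IsTwoNormComplete τ)
    (hdiffuse : ∀ f, ¬ IsMinimalProjection (⊤ : StarSubalgebra ℂ A) f)
    (hB : Monotone B) [∀ n, FiniteDimensional ℂ (B n)]
    (hdense : ∀ x, x ∈ twoNormClosure τ (⋃ n, B n : Set A))
    {D : StarSubalgebra ℂ A} [FiniteDimensional ℂ D] (hD : ∀ x ∈ D, ∀ y ∈ D, Commute x y)
    {ε : ℝ} (hε : 0 < ε) :
    ∃ C : ℕ → StarSubalgebra ℂ A, Monotone C ∧ (∀ n, FiniteDimensional ℂ (C n)) ∧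
      (∀ n, D ≤ C n) ∧ (∀ n f, IsMinimalProjection (C n) f → (τ f).re < ε) ∧
      ∃ u ∈ unitary A, ∀ n, ∀ x ∈ B n, star u * x * u ∈ C n := by
  obtain ⟨S, hS⟩ := hτ.exists_isDiagonalTower hB
  obtain ⟨T, hT, hDT⟩ := exists_isMinimalPartition_le_span hD
  obtain ⟨u, hu, hud⟩ :=
    hS.exists_unitary_conj_mem_diagonalClosure hτ hB hdense hT.isProjectionPartition hτc
  obtain ⟨N, hN⟩ := hS.exists_forall_re_map_lt hτ hτc hdense hdiffuse hε
  let q : T → A := fun e => u * e * star u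
  let C : ℕ → StarSubalgebra ℂ A := fun n =>
    StarAlgebra.adjoin ℂ ((B (N + n) : Set A) ∪ Set.range q)
  have hBC : ∀ n, B (N + n) ≤ C n := fun n =>
    Set.subset_union_left.trans (StarAlgebra.subset_adjoin ℂ _)
  let φ : A ≃⋆ₐ[ℂ] A := Unitary.conjStarAlgAut ℂ A ⟨u, hu⟩
  have hφ : ∀ x, φ x = u * x * star u := fun _ => rfl
  refine ⟨fun n => (C n).comap (φ : A →⋆ₐ[ℂ] A), fun n m hnm x hx => ?_, fun n => ?_,
    fun n x hx => ?_, fun n f hf => ?_, u, hu, fun n x hx => ?_⟩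
  · exact StarAlgebra.adjoin_mono (Set.union_subset_union_left _ (hB (by gcongr))) hx
  · have : FiniteDimensional ℂ (C n) := hS.finiteDimensional_adjoin hτ hB
      (hT.isProjectionPartition.conj hu).isStarProjection hud (N + n)
    exact finiteDimensional_comap (φ := (φ : A →⋆ₐ[ℂ] A)) φ.injective (C n)
  · have hle : Submodule.span ℂ (T : Set A) ≤
        ((C n).comap (φ : A →⋆ₐ[ℂ] A)).toSubalgebra.toSubmodule :=
      Submodule.span_le.2 fun e he => StarAlgebra.subset_adjoin ℂ _ (.inr ⟨⟨e, he⟩, rfl⟩)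
    exact hle (hDT hx)
  · obtain ⟨e, he, hle⟩ := (hS.partition (N + n)).exists_re_map_le hτ (hBC n) hf.map_of_comap
    rw [hφ, hτ.map_mul_comm, ← mul_assoc, Unitary.star_mul_self_of_mem hu, one_mul] at hle
    exact hle.trans_lt (hN _ le_self_add e he)
  · have hx' : φ (star u * x * u) = x := by
      simp only [hφ, ← mul_assoc, Unitary.mul_star_self_of_mem hu, one_mul]
      rw [mul_assoc, Unitary.mul_star_self_of_mem hu, mul_one]
    change φ (star u * x * u) ∈ C n
    rw [hx']
    exact hBC n (hB le_add_self hx)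

end Chain

section WeakOperatorTopology

open ContinuousLinearMapWOT

variable {𝕜 H : Type*} [RCLike 𝕜] [NormedAddCommGroup H] [InnerProductSpace 𝕜 H] [CompleteSpace H]

omit [CompleteSpace H] in
theorem norm_inner_apply_le {x : H →WOT[𝕜] H} (hx : ‖x.toCLM‖ ≤ 1) (v w : H) :
    ‖⟪x v, w⟫_𝕜‖ ≤ ‖v‖ * ‖w‖ :=
  (norm_inner_le_norm _ _).trans <|
    mul_le_mul_of_nonneg_right (by simpa using x.toCLM.le_of_opNorm_le hx v) (norm_nonneg w)

theorem exists_le_nhds_of_forall_tendsto_inner {l : Filter (H →WOT[𝕜] H)} [l.NeBot]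
    (hl : ∀ᶠ x in l, ‖x.toCLM‖ ≤ 1) {b : H → H → 𝕜}
    (hb : ∀ v w, Tendsto (fun x => ⟪x v, w⟫_𝕜) l (𝓝 (b v w))) :
    ∃ y : H →WOT[𝕜] H, ‖y.toCLM‖ ≤ 1 ∧ l ≤ 𝓝 y := by
  have hbound : ∀ v w, ‖b v w‖ ≤ 1 * ‖v‖ * ‖w‖ := fun v w =>
    le_of_tendsto (hb v w).norm <| hl.mono fun x hx => by
      simpa using norm_inner_apply_le hx v w
  let L : H →ₗ⋆[𝕜] H →ₗ[𝕜] 𝕜 := LinearMap.mk₂'ₛₗ (starRingEnd 𝕜) (RingHom.id 𝕜) b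
    (fun v v' w => tendsto_nhds_unique (hb _ _) (by
      simpa [inner_add_left] using (hb v w).add (hb v' w)))
    (fun c v w => tendsto_nhds_unique (hb _ _) (by
      simpa [inner_smul_left] using (hb v w).const_mul (starRingEnd 𝕜 c)))
    (fun v w w' => tendsto_nhds_unique (hb _ _) (by
      simpa [inner_add_right] using (hb v w).add (hb v w')))
    (fun c v w => tendsto_nhds_unique (hb _ _) (by
      simpa [inner_smul_right] using (hb v w).const_mul c))
  let y := InnerProductSpace.continuousLinearMapOfBilin (L.mkContinuous₂ 1 hbound)
  have hy : ∀ v w, ⟪y v, w⟫_𝕜 = b v w :=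
    InnerProductSpace.continuousLinearMapOfBilin_apply (L.mkContinuous₂ 1 hbound)
  refine ⟨ofCLM y, y.opNorm_le_of_re_inner_le zero_le_one fun v w hv hw => ?_,
    tendsto_iff_forall_inner_apply_tendsto.2 fun v w => ?_⟩
  · simpa [hy, hv, hw] using (RCLike.re_le_norm _).trans (hbound v w)
  · have h := (RCLike.continuous_conj.tendsto _).comp (hb v w)
    rw [← hy] at h
    simpa only [Function.comp_def, inner_conj_symm, coe_ofCLM] using h

theorem isCompact_setOf_norm_toCLM_le_one : IsCompact {x : H →WOT[𝕜] H | ‖x.toCLM‖ ≤ 1} := by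
  refine isCompact_iff_ultrafilter_le_nhds'.2 fun l hl => ?_
  have hb : ∀ v w : H, ∃ c : 𝕜, Tendsto (fun x : H →WOT[𝕜] H => ⟪x v, w⟫_𝕜) l (𝓝 c) := by
    intro v w
    have hball : ∀ᶠ x : H →WOT[𝕜] H in l, ⟪x v, w⟫_𝕜 ∈ Metric.closedBall (0 : 𝕜) (‖v‖ * ‖w‖) :=
      mem_of_superset hl fun x hx => mem_closedBall_zero_iff.2 (norm_inner_apply_le hx v w)
    obtain ⟨c, -, hc⟩ := (isCompact_closedBall (0 : 𝕜) (‖v‖ * ‖w‖)).ultrafilter_le_nhds'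
      (l.map fun x : H →WOT[𝕜] H => ⟪x v, w⟫_𝕜) hball
    exact ⟨c, hc⟩
  choose b hb using hb
  exact exists_le_nhds_of_forall_tendsto_inner hl hb

theorem isSeqCompact_setOf_norm_toCLM_le_one [TopologicalSpace.SeparableSpace H] :
    IsSeqCompact {x : H →WOT[𝕜] H | ‖x.toCLM‖ ≤ 1} := by
  have : CompactSpace {x : H →WOT[𝕜] H | ‖x.toCLM‖ ≤ 1} :=
    isCompact_iff_compactSpace.1 isCompact_setOf_norm_toCLM_le_one
  let d := TopologicalSpace.denseSeq H
  have hd : DenseRange d := TopologicalSpace.denseRange_denseSeq H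
  have hsep : Pairwise fun x y : {x : H →WOT[𝕜] H | ‖x.toCLM‖ ≤ 1} =>
      ∃ i : ℕ × ℕ, ⟪d i.1, x.1 (d i.2)⟫_𝕜 ≠ ⟪d i.1, y.1 (d i.2)⟫_𝕜 := by
    intro x y hxy
    contrapose! hxy
    refine Subtype.ext <| DFunLike.ext'_iff.2 <| hd.equalizer (map_continuous x.1)
      (map_continuous y.1) <| funext fun j => ?_
    exact hd.eq_of_inner_right 𝕜 fun i => hxy (i, j)
  have : TopologicalSpace.MetrizableSpace {x : H →WOT[𝕜] H | ‖x.toCLM‖ ≤ 1} :=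
    Metric.PiNatEmbed.TopologicalSpace.MetrizableSpace.of_countable_separating _
      (fun i : ℕ × ℕ =>
        ContinuousLinearMapWOT.continuous_iff.1 continuous_subtype_val (d i.2) (d i.1)) hsep
  simpa using IsSeqCompact.range
    (continuous_subtype_val (p := (· ∈ {x : H →WOT[𝕜] H | ‖x.toCLM‖ ≤ 1}))).seqContinuous

end WeakOperatorTopology

section StrongClosure

variable {𝕜 E F : Type*} [NontriviallyNormedField 𝕜] [NormedAddCommGroup E] [NormedSpace 𝕜 E]
  [NormedAddCommGroup F] [NormedSpace 𝕜 F] {S T : Set (E →L[𝕜] F)} {x : E →L[𝕜] F}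

/-- The closure of a set of operators in the strong operator topology. -/
def strongClosure (S : Set (E →L[𝕜] F)) : Set (E →L[𝕜] F) :=
  {x | ∀ s : Finset E, ∀ δ : ℝ, 0 < δ → ∃ a ∈ S, ∀ ξ ∈ s, ‖(a - x) ξ‖ < δ}

theorem strongClosure_mono (h : S ⊆ T) : strongClosure S ⊆ strongClosure T := fun _ hx s δ hδ =>
  let ⟨a, ha, hax⟩ := hx s δ hδ
  ⟨a, h ha, hax⟩

theorem mem_strongClosure_iUnion {ι : Sort*} {S : ι → Set (E →L[𝕜] F)} :
    x ∈ strongClosure (⋃ i, S i) ↔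
      ∀ s : Finset E, ∀ δ : ℝ, 0 < δ → ∃ i, ∃ a ∈ S i, ∀ ξ ∈ s, ‖(a - x) ξ‖ < δ := by
  simp only [strongClosure, Set.mem_iUnion, Set.mem_ofPred_eq, ← exists_and_right]
  exact forall₃_congr fun _ _ _ => exists_comm

theorem mem_strongClosure_of_tendsto {ι : Type*} {l : Filter ι} [l.NeBot] {a : ι → E →L[𝕜] F}
    (ha : ∀ i, a i ∈ S) (h : ∀ ξ, Tendsto (fun i => a i ξ) l (𝓝 (x ξ))) :
    x ∈ strongClosure S := by
  intro s δ hδ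
  have hs : ∀ᶠ i in l, ∀ ξ ∈ s, ‖(a i - x) ξ‖ < δ := (Finset.eventually_all s).2 fun ξ _ => by
    simpa only [dist_eq_norm, ← sub_apply] using Metric.tendsto_nhds.1 (h ξ) δ hδ
  obtain ⟨i, hi⟩ := hs.exists
  exact ⟨a i, ha i, hi⟩

theorem exists_net_of_mem_strongClosure (hx : x ∈ strongClosure S) :
    ∃ a : Finset E × ℕ → E →L[𝕜] F, (∀ i, a i ∈ S) ∧
      ∀ ξ, Tendsto (fun i => a i ξ) atTop (𝓝 (x ξ)) := by
  choose a ha hax using fun i : Finset E × ℕ => hx i.1 (1 / ((i.2 : ℝ) + 1)) (by positivity)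
  refine ⟨a, ha, fun ξ => tendsto_iff_norm_sub_tendsto_zero.2 ?_⟩
  refine squeeze_zero' (.of_forall fun i => norm_nonneg _) ?_
    (tendsto_one_div_add_atTop_nhds_zero_nat.comp (tendsto_snd.mono_left prod_atTop_atTop_eq.ge))
  filter_upwards [eventually_ge_atTop ({ξ}, 0)] with i hi
  exact (hax i ξ (hi.1 (Finset.mem_singleton_self ξ))).le

theorem exists_seq_of_mem_strongClosure [TopologicalSpace.SeparableSpace E] {K : ℝ}
    (hS : ∀ a ∈ S, ‖a‖ ≤ K) (hx : x ∈ strongClosure S) :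
    ∃ a : ℕ → E →L[𝕜] F, (∀ n, a n ∈ S) ∧ ∀ ξ, Tendsto (fun n => a n ξ) atTop (𝓝 (x ξ)) := by
  classical
  let d := TopologicalSpace.denseSeq E
  choose a ha hax using fun n : ℕ =>
    hx ((Finset.range (n + 1)).image d) (1 / ((n : ℝ) + 1)) (by positivity)
  have hequi : Equicontinuous fun n ξ => a n ξ := by
    have hle : ∀ n, ‖a n‖₊ ≤ K.toNNReal := fun n => NNReal.coe_le_coe.1
      ((hS _ (ha n)).trans (Real.le_coe_toNNReal K))
    exact (LipschitzWith.uniformEquicontinuous _ K.toNNReal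
      fun n => (a n).lipschitz.weaken (hle n)).equicontinuous
  have hclosed : IsClosed {ξ | Tendsto (fun n => a n ξ) atTop (𝓝 (x ξ))} :=
    hequi.isClosed_setOfPred_tendsto x.continuous
  refine ⟨a, ha, fun ξ => hclosed.closure_subset_iff.2 ?_
    (TopologicalSpace.denseRange_denseSeq E ξ)⟩
  rintro _ ⟨i, rfl⟩
  refine tendsto_iff_norm_sub_tendsto_zero.2 (squeeze_zero' (.of_forall fun i => norm_nonneg _) ?_
    tendsto_one_div_add_atTop_nhds_zero_nat)
  filter_upwards [eventually_ge_atTop i] with n hn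
  exact (hax n _ (Finset.mem_image_of_mem d (Finset.mem_range_succ_iff.2 hn))).le

end StrongClosure

section StrongWeak

open ContinuousLinearMapWOT

variable {H : Type*} [NormedAddCommGroup H] [InnerProductSpace ℂ H]
  {S : Set (H →L[ℂ] H)} {x : H →L[ℂ] H}

theorem mem_strongClosure_of_convex (hS : Convex ℝ S)
    (hx : ofCLM x ∈ closure (ofCLM '' S : Set (H →WOT[ℂ] H))) : x ∈ strongClosure S := by
  classical
  intro s δ hδ
  let e : (H →WOT[ℂ] H) →ₗ[ℂ] s → H :=
    { toFun := fun a ξ => a ξ, map_add' := fun a b => rfl, map_smul' := fun c a => rfl }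
  have he : ∀ f : StrongDual ℂ (s → H), Continuous (e.dualMap f) := fun f => by
    have hsum : ∀ a, e.dualMap f a = ∑ ξ : s, f.comp (.single ℂ (fun _ => H) ξ) (a ξ) := fun a => by
      simp only [ContinuousLinearMap.comp_apply, ContinuousLinearMap.single_apply, ← map_sum]
      exact congrArg f (Finset.univ_sum_single (e a)).symm
    rw [funext hsum]
    exact continuous_finsetSum _ fun ξ _ => continuous_dual_apply _ _
  have hS' : Convex ℝ (ofCLM '' S : Set (H →WOT[ℂ] H)) :=
    hS.linear_image (linearEquiv ℝ).symm.toLinearMap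
  obtain ⟨_, ⟨_, ⟨a, ha, rfl⟩, rfl⟩, hax⟩ := Metric.mem_closure_iff.1
    (e.image_closure_of_convex hS' he (Set.mem_image_of_mem e hx)) δ hδ
  refine ⟨a, ha, fun ξ hξ => ?_⟩
  have := (dist_pi_lt_iff hδ).1 hax ⟨ξ, hξ⟩
  rwa [dist_comm, dist_eq_norm] at this

variable [CompleteSpace H]

theorem tendsto_ofCLM_of_tendsto_apply {ι : Type*} {l : Filter ι} {a : ι → H →L[ℂ] H}
    (h : ∀ ξ, Tendsto (fun i => a i ξ) l (𝓝 (x ξ))) :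
    Tendsto (fun i => ofCLM (a i)) l (𝓝 (ofCLM x)) :=
  tendsto_iff_forall_inner_apply_tendsto.2 fun v _ => tendsto_const_nhds.inner (h v)

theorem mem_strongClosure_isSelfAdjoint (hS : Convex ℝ S) (hstar : ∀ a ∈ S, star a ∈ S)
    (hxS : x ∈ strongClosure S) (hx : IsSelfAdjoint x) :
    x ∈ strongClosure {a ∈ S | IsSelfAdjoint a} := by
  classical
  obtain ⟨a, ha, hax⟩ := exists_net_of_mem_strongClosure hxS
  have hlim : Tendsto (fun i => ofCLM (realPart (a i) : H →L[ℂ] H)) atTop (𝓝 (ofCLM x)) := by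
    have h := tendsto_ofCLM_of_tendsto_apply hax
    have hre : ∀ y : H →L[ℂ] H, ofCLM (realPart y : H →L[ℂ] H)
        = (2⁻¹ : ℂ) • (ofCLM y + star (ofCLM y)) := fun y => by
      rw [realPart_apply_coe, ← Complex.coe_smul, Complex.ofReal_inv, Complex.ofReal_ofNat]
      rfl
    rw [← hx.coe_realPart, hre]
    simpa only [hre] using (h.add h.star).const_smul (2⁻¹ : ℂ)
  refine mem_strongClosure_of_convex ?_ (mem_closure_of_tendsto hlim (.of_forall fun i =>
    Set.mem_image_of_mem _ ⟨?_, (realPart (a i)).2⟩))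
  · exact hS.inter (selfAdjoint.submodule ℝ (H →L[ℂ] H)).convex
  · rw [realPart_apply_coe, smul_add]
    exact hS (ha i) (hstar _ (ha i)) (by norm_num) (by norm_num) (by norm_num)

end StrongWeak

section Kaplansky

/-- The Cauchy kernel `t ↦ (1 + t ^ 2)⁻¹`, whose functional calculus at a self-adjoint operator `a`
is the inverse of `1 + a ^ 2`. -/
noncomputable def cauchyFun (t : ℝ) : ℝ := (1 + t ^ 2)⁻¹

/-- The function `t ↦ sin (2 * arctan t)`, which maps the real line onto `[-1, 1]` and whose
functional calculus is strongly continuous; it truncates operators in Kaplansky's density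
theorem. -/
noncomputable def kaplanskyFun (t : ℝ) : ℝ := 2 * (t * cauchyFun t)

theorem continuous_cauchyFun : Continuous cauchyFun :=
  Continuous.inv₀ (by fun_prop) fun t => by positivity

theorem continuous_kaplanskyFun : Continuous kaplanskyFun :=
  continuous_const.mul (continuous_id.mul continuous_cauchyFun)

theorem abs_kaplanskyFun_le_one (t : ℝ) : |kaplanskyFun t| ≤ 1 := by
  rw [kaplanskyFun, cauchyFun, ← div_eq_mul_inv, mul_div_assoc', abs_div, abs_mul, abs_two,
    div_le_one (by positivity), abs_of_pos (by positivity : 0 < 1 + t ^ 2), ← sq_abs t]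
  nlinarith [sq_nonneg (|t| - 1)]

theorem kaplanskyFun_div_one_add_sqrt {t : ℝ} (ht : |t| ≤ 1) :
    kaplanskyFun (t / (1 + √(1 - t ^ 2))) = t := by
  have hs : √(1 - t ^ 2) ^ 2 = 1 - t ^ 2 := Real.sq_sqrt
    (sub_nonneg.2 ((sq_le_one_iff_abs_le_one t).2 ht))
  set s := √(1 - t ^ 2)
  have hs0 : 0 ≤ s := Real.sqrt_nonneg _
  have hden : 1 + (t / (1 + s)) ^ 2 = 2 / (1 + s) := by
    field_simp
    linear_combination hs
  rw [kaplanskyFun, cauchyFun, hden]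
  field_simp

variable {H : Type*} [NormedAddCommGroup H] [InnerProductSpace ℂ H] [CompleteSpace H]
  {S : Set (H →L[ℂ] H)} {a x y : H →L[ℂ] H}

theorem norm_cfc_kaplanskyFun_le_one (a : H →L[ℂ] H) : ‖cfc kaplanskyFun a‖ ≤ 1 :=
  norm_cfc_le zero_le_one fun t _ => abs_kaplanskyFun_le_one t

theorem norm_cfc_cauchyFun_le_one (a : H →L[ℂ] H) : ‖cfc cauchyFun a‖ ≤ 1 :=
  norm_cfc_le zero_le_one fun t _ => by
    rw [cauchyFun, Real.norm_of_nonneg (by positivity)]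
    exact inv_le_one_of_one_le₀ (by nlinarith)

theorem cfc_kaplanskyFun (ha : IsSelfAdjoint a) :
    cfc kaplanskyFun a = (2 : ℝ) • (a * cfc cauchyFun a) := by
  have hcont : Continuous fun t => t * cauchyFun t := continuous_id.mul continuous_cauchyFun
  rw [mul_cfc ha continuous_cauchyFun.continuousOn, ← cfc_const_mul 2 _ a hcont.continuousOn]
  rfl

theorem one_add_mul_self_mul_cfc_cauchyFun (ha : IsSelfAdjoint a) :
    (1 + a * a) * cfc cauchyFun a = 1 := by
  have hsq : 1 + a * a = cfc (fun t : ℝ => 1 + t ^ 2) a := by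
    rw [cfc_const_add 1 (fun t : ℝ => t ^ 2) a, cfc_pow_id a 2, map_one, sq]
  rw [hsq, ← cfc_mul _ _ a (by fun_prop) continuous_cauchyFun.continuousOn]
  exact (cfc_congr fun t _ => mul_inv_cancel₀ (by positivity)).trans (cfc_const_one ℝ a)

theorem cfc_kaplanskyFun_sub (ha : IsSelfAdjoint a) (hy : IsSelfAdjoint y) :
    cfc kaplanskyFun a - cfc kaplanskyFun y =
      (2 : ℝ) • (cfc cauchyFun a * (a - y) *
          cfc cauchyFun y) -
        cfc kaplanskyFun a * (a - y) * (y * cfc cauchyFun y) := by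
  have hac : Commute a (cfc cauchyFun a) := by
    simpa only [cfc_id' ℝ a] using cfc_commute_cfc (fun t : ℝ => t) cauchyFun a
  have hra : cfc cauchyFun a * (1 + a * a) = 1 := by
    rw [← ((Commute.one_left _).add_left (hac.mul_left hac)).eq,
      one_add_mul_self_mul_cfc_cauchyFun ha]
  have hry := one_add_mul_self_mul_cfc_cauchyFun hy
  rw [cfc_kaplanskyFun ha, cfc_kaplanskyFun hy]
  set r := cfc cauchyFun a
  set q := cfc cauchyFun y
  rw [smul_mul_assoc, smul_mul_assoc, ← smul_sub, ← smul_sub]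
  congr 1
  calc a * r - y * q = r * a * ((1 + y * y) * q) - r * (1 + a * a) * y * q := by
        rw [hra, hry, mul_one, one_mul, hac.eq]
    _ = _ := by rw [hac.eq]; noncomm_ring

theorem tendsto_cfc_kaplanskyFun_apply {ι : Type*} {l : Filter ι} {a : ι → H →L[ℂ] H}
    (ha : ∀ i, IsSelfAdjoint (a i)) (hy : IsSelfAdjoint y)
    (h : ∀ ξ, Tendsto (fun i => a i ξ) l (𝓝 (y ξ))) (ξ : H) :
    Tendsto (fun i => cfc kaplanskyFun (a i) ξ) l (𝓝 (cfc kaplanskyFun y ξ)) := by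
  let q := cfc cauchyFun y
  have hnorm : ∀ ζ, Tendsto (fun i => ‖(a i - y) ζ‖) l (𝓝 0) := fun ζ =>
    tendsto_iff_norm_sub_tendsto_zero.1 (h ζ)
  refine tendsto_iff_norm_sub_tendsto_zero.2 (squeeze_zero (fun i => norm_nonneg _) (fun i => ?_)
    (by simpa using ((hnorm (q ξ)).const_mul 2).add (hnorm (y (q ξ)))))
  rw [← sub_apply, cfc_kaplanskyFun_sub (ha i) hy, sub_apply]
  refine (norm_sub_le _ _).trans (add_le_add ?_ ?_)
  · rw [smul_apply, norm_smul, Real.norm_two]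
    refine mul_le_mul_of_nonneg_left ?_ zero_le_two
    simpa using ContinuousLinearMap.le_of_opNorm_le _ (norm_cfc_cauchyFun_le_one (a i))
      ((a i - y) (q ξ))
  · simpa using ContinuousLinearMap.le_of_opNorm_le _ (norm_cfc_kaplanskyFun_le_one (a i))
      ((a i - y) (y (q ξ)))

theorem cfc_kaplanskyFun_mem_strongClosure (hS : ∀ a ∈ S, IsSelfAdjoint a) (hy : IsSelfAdjoint y)
    (hyS : y ∈ strongClosure S) : cfc kaplanskyFun y ∈ strongClosure (cfc kaplanskyFun '' S) := by
  classical
  obtain ⟨a, ha, hay⟩ := exists_net_of_mem_strongClosure hyS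
  exact mem_strongClosure_of_tendsto (fun i => Set.mem_image_of_mem _ (ha i))
    (tendsto_cfc_kaplanskyFun_apply (fun i => hS _ (ha i)) hy hay)

theorem mem_strongClosure_norm_le_one {M : StarSubalgebra ℂ (H →L[ℂ] H)}
    [IsClosed (M : Set (H →L[ℂ] H))] (hS : Convex ℝ S) (hstar : ∀ a ∈ S, star a ∈ S)
    (hcfc : ∀ a ∈ S, cfc kaplanskyFun a ∈ S) (hM : (M : Set (H →L[ℂ] H)) ⊆ strongClosure S)
    (hxM : x ∈ M) (hx : IsSelfAdjoint x) (hx1 : ‖x‖ ≤ 1) :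
    x ∈ strongClosure {a ∈ S | ‖a‖ ≤ 1} := by
  let y := cfc (fun t : ℝ => t / (1 + √(1 - t ^ 2))) x
  have hy : IsSelfAdjoint y := cfc_predicate _ x
  have hyM : y ∈ M := cfc_mem (𝕜' := ℂ) _ hxM
  have hxy : cfc kaplanskyFun y = x := by
    have hcont : Continuous fun t : ℝ => t / (1 + √(1 - t ^ 2)) :=
      Continuous.div (by fun_prop) (by fun_prop) fun t => by positivity
    rw [← cfc_comp' kaplanskyFun _ x continuous_kaplanskyFun.continuousOn hcont.continuousOn]
    have hspec : ∀ t ∈ spectrum ℝ x, |t| ≤ 1 := fun t ht =>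
      (norm_apply_le_norm_cfc (fun s : ℝ => s) x ht).trans (by rwa [cfc_id' ℝ x])
    exact (cfc_congr fun t ht => kaplanskyFun_div_one_add_sqrt (hspec t ht)).trans (cfc_id' ℝ x)
  rw [← hxy]
  refine strongClosure_mono ?_ (cfc_kaplanskyFun_mem_strongClosure (fun a ha => ha.2) hy
    (mem_strongClosure_isSelfAdjoint hS hstar (hM hyM) hy))
  rintro _ ⟨a, ha, rfl⟩
  exact ⟨hcfc a ha.1, norm_cfc_kaplanskyFun_le_one a⟩

end Kaplansky

section VonNeumannAlgebra

open ContinuousLinearMapWOT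

variable {H : Type*} [NormedAddCommGroup H] [InnerProductSpace ℂ H] [CompleteSpace H]

theorem tendsto_ofCLM_star_mul_self {ι : Type*} {l : Filter ι} {z : ι → H →L[ℂ] H}
    (hz : ∀ ξ, Tendsto (fun i => z i ξ) l (𝓝 0)) :
    Tendsto (fun i => ofCLM (star (z i) * z i)) l (𝓝 0) :=
  tendsto_iff_forall_inner_apply_tendsto.2 fun v w => by
    have hinner : ∀ i, ⟪w, (ofCLM (star (z i) * z i)) v⟫_ℂ = ⟪z i w, z i v⟫_ℂ := fun i =>
      ContinuousLinearMap.adjoint_inner_right (z i) w (z i v)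
    simp only [hinner]
    simpa using (hz w).inner (𝕜 := ℂ) (hz v)

variable {M : VonNeumannAlgebra H} {τ : M.toStarSubalgebra →ₗ[ℂ] ℂ}

theorem isClosed_setOf_toCLM_mem (M : VonNeumannAlgebra H) :
    IsClosed {x : H →WOT[ℂ] H | x.toCLM ∈ M} := by
  have hset : {x : H →WOT[ℂ] H | x.toCLM ∈ M} =
      ⋂ g ∈ M.commutant, {x | ofCLM g * x = x * ofCLM g} := by
    ext x
    have hx := VonNeumannAlgebra.mem_commutant_iff (S := M.commutant) (z := x.toCLM)
    rw [M.commutant_commutant] at hx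
    simp only [← ofCLM_injective.eq_iff] at hx
    simp only [Set.mem_iInter]
    exact hx
  rw [hset]
  exact isClosed_biInter fun g _ => isClosed_eq (by fun_prop) (by fun_prop)

instance isClosed_toStarSubalgebra (M : VonNeumannAlgebra H) :
    IsClosed (M.toStarSubalgebra : Set (H →L[ℂ] H)) := by
  rw [VonNeumannAlgebra.coe_toStarSubalgebra, ← M.centralizer_centralizer]
  exact Set.isClosed_centralizer _

/-- Normality of a functional on a von Neumann algebra, expressed as sequential continuity on the
unit ball for the weak operator topology; on a separable Hilbert space this is equivalent to
σ-weak continuity. -/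
def IsNormalFunctional (τ : M.toStarSubalgebra →ₗ[ℂ] ℂ) : Prop :=
  ∀ (x : ℕ → M.toStarSubalgebra) (y : M.toStarSubalgebra), (∀ n, ‖x n‖ ≤ 1) →
    Tendsto (fun n => ofCLM (x n).1) atTop (𝓝 (ofCLM y.1)) →
      Tendsto (fun n => τ (x n)) atTop (𝓝 (τ y))

theorem IsNormalFunctional.tendsto (hn : IsNormalFunctional τ) {x : ℕ → M.toStarSubalgebra}
    {y : M.toStarSubalgebra} {K : ℝ} (hK : ∀ n, ‖x n‖ ≤ K)
    (h : Tendsto (fun n => ofCLM (x n).1) atTop (𝓝 (ofCLM y.1))) :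
    Tendsto (fun n => τ (x n)) atTop (𝓝 (τ y)) := by
  have hK0 : 0 < K + 1 := add_pos_of_nonneg_of_pos ((norm_nonneg _).trans (hK 0)) one_pos
  let c : ℂ := (K + 1 : ℝ)
  have hc : c ≠ 0 := Complex.ofReal_ne_zero.2 hK0.ne'
  have hball : ∀ n, ‖c⁻¹ • x n‖ ≤ 1 := fun n => by
    rw [norm_smul, norm_inv, Complex.norm_of_nonneg hK0.le, inv_mul_le_one₀ hK0]
    linarith [hK n]
  have hlim := hn (fun n => c⁻¹ • x n) (c⁻¹ • y) hball (h.const_smul c⁻¹)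
  simpa only [map_smul, smul_eq_mul, mul_inv_cancel_left₀ hc] using hlim.const_mul c

theorem IsNormalFunctional.tendsto_twoNorm (hn : IsNormalFunctional τ)
    {x : ℕ → M.toStarSubalgebra} {y : M.toStarSubalgebra} (hx : ∀ n, ‖x n‖ ≤ 1)
    (h : ∀ ξ, Tendsto (fun n => (x n).1 ξ) atTop (𝓝 (y.1 ξ))) :
    Tendsto (fun n => twoNorm τ (x n - y)) atTop (𝓝 0) := by
  let z : ℕ → M.toStarSubalgebra := fun n => x n - y
  have hbound : ∀ n, ‖star (z n) * z n‖ ≤ (1 + ‖y‖) * (1 + ‖y‖) := fun n => by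
    have hzn : ‖z n‖ ≤ 1 + ‖y‖ := (norm_sub_le _ _).trans (add_le_add_left (hx n) _)
    rw [CStarRing.norm_star_mul_self]
    gcongr
  have hz : ∀ ξ, Tendsto (fun n => (z n).1 ξ) atTop (𝓝 0) := fun ξ =>
    tendsto_sub_nhds_zero_iff.2 (h ξ)
  have hweak : Tendsto (fun n => ofCLM (star (z n) * z n).1) atTop
      (𝓝 (ofCLM (0 : M.toStarSubalgebra).1)) := tendsto_ofCLM_star_mul_self hz
  have hre := (Complex.continuous_re.tendsto _).comp (hn.tendsto hbound hweak)
  rw [map_zero, Complex.zero_re] at hre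
  exact Real.sqrt_zero ▸ hre.sqrt

variable [TopologicalSpace.SeparableSpace H]

theorem exists_subseq_tendsto_ofCLM {x : ℕ → M.toStarSubalgebra} (hx : ∀ n, ‖x n‖ ≤ 1) :
    ∃ y : M.toStarSubalgebra, ‖y‖ ≤ 1 ∧ ∃ φ : ℕ → ℕ, StrictMono φ ∧
      Tendsto (fun n => ofCLM (x (φ n)).1) atTop (𝓝 (ofCLM y.1)) := by
  obtain ⟨y, hy, φ, hφ, hlim⟩ := isSeqCompact_setOf_norm_toCLM_le_one
    (x := fun n => ofCLM (x n).1) hx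
  have hyM : y.toCLM ∈ M := (isClosed_setOf_toCLM_mem M).mem_of_tendsto hlim
    (.of_forall fun n => (x (φ n)).2)
  exact ⟨⟨y.toCLM, hyM⟩, hy, φ, hφ, hlim⟩

theorem IsNormalFunctional.isTwoNormComplete (hn : IsNormalFunctional τ)
    (hτ : IsFaithfulTracialState τ) : IsTwoNormComplete τ := by
  intro x hx hcauchy
  obtain ⟨y, hy1, φ, hφ, hy⟩ := exists_subseq_tendsto_ofCLM hx
  have hle : ∀ δ > 0, ∃ N, ∀ n ≥ N, twoNorm τ (x n - y) ≤ δ := fun δ hδ => by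
    obtain ⟨N, hN⟩ := hcauchy (δ / 2) (half_pos hδ)
    refine ⟨N, fun n hnN => ?_⟩
    let z := x n - y
    have hlim : Tendsto (fun k => τ (star z * (x n - x (φ k)))) atTop (𝓝 (τ (star z * z))) :=
      hn.tendsto (K := ‖star z‖ * 2) (fun k => (norm_mul_le _ _).trans
        (mul_le_mul_of_nonneg_left ((norm_sub_le _ _).trans (by linarith [hx n, hx (φ k)]))
          (norm_nonneg _)))
        ((hy.const_sub (ofCLM (x n).1)).const_mul (ofCLM (star z).1))
    have hτz : ‖τ (star z * z)‖ ≤ twoNorm τ z * δ := by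
      refine le_of_tendsto hlim.norm ?_
      filter_upwards [eventually_ge_atTop N] with k hk
      refine (hτ.norm_map_star_mul_le _ _).trans
        (mul_le_mul_of_nonneg_left ?_ (twoNorm_nonneg _))
      have hφk := hN (φ k) (hk.trans (hφ.id_le k))
      rw [twoNorm_sub_comm] at hφk
      linarith [hN n hnN, hτ.twoNorm_sub_le (x n) (x N) (x (φ k))]
    have hsq : twoNorm τ z ^ 2 ≤ twoNorm τ z * δ :=
      (hτ.twoNorm_sq z).trans_le ((Complex.re_le_norm _).trans hτz)
    nlinarith [twoNorm_nonneg (τ := τ) z]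
  refine ⟨y, hy1, Metric.tendsto_atTop.2 fun δ hδ => ?_⟩
  obtain ⟨N, hN⟩ := hle (δ / 2) (half_pos hδ)
  refine ⟨N, fun n hnN => ?_⟩
  rw [Real.dist_0_eq_abs, abs_of_nonneg (twoNorm_nonneg _)]
  linarith [hN n hnN]

end VonNeumannAlgebra

section TwoNormDensity

variable {A : Type*} [CStarAlgebra A] {τ : A →ₗ[ℂ] ℂ} {p : Submodule ℂ A}

theorem smul_mem_twoNormClosure (hτ : IsFaithfulTracialState τ) (c : ℂ) {x : A}
    (hx : x ∈ twoNormClosure τ p) : c • x ∈ twoNormClosure τ p :=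
  hτ.map_mem_twoNormClosure (f := c • LinearMap.id) (fun y => (twoNorm_smul c y).le)
    (fun _ ha => p.smul_mem c ha) hx

theorem add_mem_twoNormClosure (hτ : IsFaithfulTracialState τ) {x y : A}
    (hx : x ∈ twoNormClosure τ p) (hy : y ∈ twoNormClosure τ p) :
    x + y ∈ twoNormClosure τ p := fun δ hδ => by
  obtain ⟨a, ha, hax⟩ := hx (δ / 2) (half_pos hδ)
  obtain ⟨b, hb, hby⟩ := hy (δ / 2) (half_pos hδ)
  refine ⟨a + b, p.add_mem ha hb, ?_⟩
  rw [add_sub_add_comm]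
  exact (hτ.twoNorm_add_le _ _).trans_lt (by linarith)

theorem forall_mem_twoNormClosure_of_isSelfAdjoint (hτ : IsFaithfulTracialState τ)
    (h : ∀ x : A, IsSelfAdjoint x → ‖x‖ ≤ 1 → x ∈ twoNormClosure τ p) (x : A) :
    x ∈ twoNormClosure τ p := by
  have hsa : ∀ x : A, IsSelfAdjoint x → x ∈ twoNormClosure τ p := fun x hx => by
    have hball := h ((‖x‖ : ℂ)⁻¹ • x) (.smul (by simp [isSelfAdjoint_iff]) hx) (by
      rw [norm_smul, norm_inv, Complex.norm_of_nonneg (norm_nonneg x)]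
      exact inv_mul_le_one)
    obtain rfl | hx0 := eq_or_ne x 0
    · exact h 0 hx (by simp)
    · have := smul_mem_twoNormClosure hτ (‖x‖ : ℂ) hball
      rwa [smul_inv_smul₀ (by simpa using hx0)] at this
  rw [← realPart_add_I_smul_imaginaryPart x]
  exact add_mem_twoNormClosure hτ (hsa _ (realPart x).2)
    (smul_mem_twoNormClosure hτ _ (hsa _ (imaginaryPart x).2))

end TwoNormDensity

section Hyperfinite

variable {H : Type*} [NormedAddCommGroup H] [InnerProductSpace ℂ H] [CompleteSpace H]
  {M : VonNeumannAlgebra H} {τ : M.toStarSubalgebra →ₗ[ℂ] ℂ} {S : StarSubalgebra ℂ (H →L[ℂ] H)}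

theorem mem_twoNormClosure_comap_of_strongClosure [TopologicalSpace.SeparableSpace H]
    (hn : IsNormalFunctional τ) (hτ : IsFaithfulTracialState τ) (hSM : S ≤ M.toStarSubalgebra)
    (hcfc : ∀ a ∈ S, cfc kaplanskyFun a ∈ S)
    (hS : (M.toStarSubalgebra : Set (H →L[ℂ] H)) ⊆ strongClosure S) (x : M.toStarSubalgebra) :
    x ∈ twoNormClosure τ (S.comap M.toStarSubalgebra.subtype) := by
  let p := Subalgebra.toSubmodule (S.comap M.toStarSubalgebra.subtype).toSubalgebra
  refine forall_mem_twoNormClosure_of_isSelfAdjoint (p := p) hτ (fun x hx hx1 δ hδ => ?_) x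
  have hxS : x.1 ∈ strongClosure {a ∈ (S : Set (H →L[ℂ] H)) | ‖a‖ ≤ 1} :=
    mem_strongClosure_norm_le_one
      ((Subalgebra.toSubmodule S.toSubalgebra).restrictScalars ℝ).convex
      (fun _ => star_mem) hcfc hS x.2 (congrArg Subtype.val hx) hx1
  obtain ⟨a, ha, hax⟩ := exists_seq_of_mem_strongClosure (fun _ ha => ha.2) hxS
  have hlim := hn.tendsto_twoNorm (x := fun n => ⟨a n, hSM (ha n).1⟩) (fun n => (ha n).2) hax
  obtain ⟨n, hnδ⟩ := (hlim.eventually_lt_const hδ).exists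
  exact ⟨_, (ha n).1, hnδ⟩

theorem mem_twoNormClosure_iUnion_comap [TopologicalSpace.SeparableSpace H]
    (hn : IsNormalFunctional τ) (hτ : IsFaithfulTracialState τ)
    {B : ℕ → StarSubalgebra ℂ (H →L[ℂ] H)} (hB : Monotone B) [∀ n, FiniteDimensional ℂ (B n)]
    (hBM : ∀ n, B n ≤ M.toStarSubalgebra)
    (hdense : (M.toStarSubalgebra : Set (H →L[ℂ] H)) ⊆ strongClosure (⋃ n, B n))
    (x : M.toStarSubalgebra) :
    x ∈ twoNormClosure τ (⋃ n, (B n).comap M.toStarSubalgebra.subtype) := by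
  have hsup : ((⨆ n, B n : StarSubalgebra ℂ (H →L[ℂ] H)) : Set (H →L[ℂ] H)) = ⋃ n, B n :=
    StarSubalgebra.coe_iSup_of_directed hB.directed_le
  have hmem : ∀ a, a ∈ ⨆ n, B n ↔ ∃ n, a ∈ B n := fun a => by
    rw [← SetLike.mem_coe, hsup, Set.mem_iUnion]
    rfl
  have hcfc : ∀ a ∈ ⨆ n, B n, cfc kaplanskyFun a ∈ ⨆ n, B n := fun a ha => by
    obtain ⟨n, han⟩ := (hmem a).1 ha
    exact (hmem _).2 ⟨n, cfc_mem_of_finiteDimensional _ han⟩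
  have hx := mem_twoNormClosure_comap_of_strongClosure hn hτ (iSup_le hBM) hcfc
    (hsup ▸ hdense) x
  rwa [StarSubalgebra.coe_comap, hsup, Set.preimage_iUnion] at hx

theorem mem_strongClosure_image_conj {v x : H →L[ℂ] H} (hv : v ∈ unitary (H →L[ℂ] H))
    {S : Set (H →L[ℂ] H)} (hx : v * x * star v ∈ strongClosure S) :
    x ∈ strongClosure ((fun b => star v * b * v) '' S) := by
  classical
  intro s δ hδ
  obtain ⟨b, hb, hbx⟩ := hx (s.image v) δ hδ
  refine ⟨_, ⟨b, hb, rfl⟩, fun ξ hξ => ?_⟩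
  have hconj : star v * b * v - x = star v * (b - v * x * star v) * v := by
    calc star v * b * v - x = star v * b * v - (star v * v) * x * (star v * v) := by
          rw [Unitary.star_mul_self_of_mem hv, one_mul, mul_one]
      _ = _ := by noncomm_ring
  calc ‖(star v * b * v - x) ξ‖ = ‖star v ((b - v * x * star v) (v ξ))‖ := by rw [hconj]; rfl
    _ ≤ ‖(b - v * x * star v) (v ξ)‖ := by
      simpa only [one_mul] using
        (star v).le_of_opNorm_le (norm_le_one_of_mem_unitary (Unitary.star_mem hv)) _
    _ < δ := hbx (v ξ) (Finset.mem_image_of_mem _ hξ)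

theorem subset_strongClosure_iUnion_map {B : ℕ → StarSubalgebra ℂ (H →L[ℂ] H)}
    (hBM : ∀ n, B n ≤ M.toStarSubalgebra)
    (hdense : (M.toStarSubalgebra : Set (H →L[ℂ] H)) ⊆ strongClosure (⋃ n, B n))
    {C : ℕ → StarSubalgebra ℂ M.toStarSubalgebra} {u : M.toStarSubalgebra}
    (hu : u ∈ unitary M.toStarSubalgebra)
    (hC : ∀ n, ∀ x ∈ (B n).comap M.toStarSubalgebra.subtype, star u * x * u ∈ C n) :
    (M.toStarSubalgebra : Set (H →L[ℂ] H)) ⊆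
      strongClosure (⋃ n, (C n).map M.toStarSubalgebra.subtype) := by
  intro x hx
  have hv : u.1 ∈ unitary (H →L[ℂ] H) := Unitary.map_mem M.toStarSubalgebra.subtype hu
  refine strongClosure_mono (Set.image_subset_iff.2 (Set.iUnion_subset fun n b hb => ?_))
    (mem_strongClosure_image_conj hv (hdense (u * ⟨x, hx⟩ * star u).2))
  exact Set.mem_iUnion.2 ⟨n, _, hC n ⟨b, hBM n hb⟩ hb, rfl⟩

theorem IsMinimalProjection.coe_of_top {f : M.toStarSubalgebra}
    (hf : IsMinimalProjection (⊤ : StarSubalgebra ℂ M.toStarSubalgebra) f) :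
    IsMinimalProjection M.toStarSubalgebra (f : H →L[ℂ] H) where
  mem := f.2
  isStarProjection := hf.isStarProjection.map M.toStarSubalgebra.subtype
  ne_zero h := hf.ne_zero (Subtype.ext h)
  exists_eq_smul x hx :=
    let ⟨c, hc⟩ := hf.exists_eq_smul ⟨x, hx⟩ trivial
    ⟨c, congrArg Subtype.val hc⟩

end Hyperfinite

/-- strengthening of Lemma 3.1 used in the proof of Proposition 4.1.
Let `M` be a hyperfinite von Neumann algebra on a separable complex Hilbert space with a
faithful normal tracial state `τ` (normality expressed via WOT-sequential continuity on
the unit ball, which suffices since `H` is separable), and suppose `M` is diffuse, i.e.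
it has no minimal projections.  Let `D` be a finite-dimensional abelian unital
*-subalgebra of `M` and let `ε > 0`.  Then there is an increasing chain
`A 0 ⊆ A 1 ⊆ ⋯` of finite-dimensional unital *-subalgebras of `M`, each containing `D`,
whose union is dense in `M` in the strong operator topology, and such that every minimal
projection of every `A n` has trace less than `ε`. -/
theorem stmt8 {H : Type*} [NormedAddCommGroup H] [InnerProductSpace ℂ H]
    [CompleteSpace H] [TopologicalSpace.SeparableSpace H]
    (M : VonNeumannAlgebra H)
    -- a faithful normal tracial state on `M`:
    (τ : (H →L[ℂ] H) →ₗ[ℂ] ℂ)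
    (hτ_unital : τ 1 = 1)
    (hτ_tracial : ∀ x ∈ M, ∀ y ∈ M, τ (x * y) = τ (y * x))
    (hτ_pos : ∀ x ∈ M, 0 ≤ (τ (star x * x)).re ∧ (τ (star x * x)).im = 0)
    (hτ_faithful : ∀ x ∈ M, τ (star x * x) = 0 → x = 0)
    (hτ_normal : ∀ (x : ℕ → H →L[ℂ] H) (y : H →L[ℂ] H),
      (∀ n, x n ∈ M) → (∀ n, ‖x n‖ ≤ 1) → y ∈ M →
      (∀ ξ η : H, Tendsto (fun n => ⟪ξ, x n η⟫_ℂ) atTop (𝓝 ⟪ξ, y η⟫_ℂ)) →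
      Tendsto (fun n => τ (x n)) atTop (𝓝 (τ y)))
    -- `M` is hyperfinite:
    (hyperfinite : ∃ B : ℕ → StarSubalgebra ℂ (H →L[ℂ] H),
      Monotone B ∧ (∀ n, (B n : Set (H →L[ℂ] H)) ⊆ M) ∧
      (∀ n, FiniteDimensional ℂ (B n)) ∧
      (∀ x ∈ M, ∀ s : Finset H, ∀ ε' : ℝ, 0 < ε' →
        ∃ n, ∃ a ∈ B n, ∀ ξ ∈ s, ‖(a - x) ξ‖ < ε'))
    -- `M` is diffuse: it contains no minimal projections
    (diffuse : ∀ p ∈ M, IsSelfAdjoint p → p * p = p → p ≠ 0 →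
      ∃ x ∈ M, ∀ c : ℂ, p * x * p ≠ c • p)
    -- `D` is a finite-dimensional abelian unital *-subalgebra of `M`:
    (D : StarSubalgebra ℂ (H →L[ℂ] H))
    (hDM : (D : Set (H →L[ℂ] H)) ⊆ M)
    (hDfin : FiniteDimensional ℂ D)
    (hDab : ∀ x ∈ D, ∀ y ∈ D, x * y = y * x)
    (ε : ℝ) (hε : 0 < ε) :
    ∃ A : ℕ → StarSubalgebra ℂ (H →L[ℂ] H),
      Monotone A ∧
      (∀ n, (A n : Set (H →L[ℂ] H)) ⊆ M) ∧
      (∀ n, FiniteDimensional ℂ (A n)) ∧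
      (∀ n, D ≤ A n) ∧
      (∀ x ∈ M, ∀ s : Finset H, ∀ ε' : ℝ, 0 < ε' →
        ∃ n, ∃ a ∈ A n, ∀ ξ ∈ s, ‖(a - x) ξ‖ < ε') ∧
      -- every minimal projection of every `A n` has trace less than `ε`:
      (∀ n, ∀ p ∈ A n, IsSelfAdjoint p → p * p = p → p ≠ 0 →
        (∀ x ∈ A n, ∃ c : ℂ, p * x * p = c • p) → (τ p).re < ε) := by
  obtain ⟨B, hB, hBM, hBfin, hBd⟩ := hyperfinite
  let ι := M.toStarSubalgebra.subtype
  have hι : Function.Injective ι := Subtype.val_injective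
  let τM : M.toStarSubalgebra →ₗ[ℂ] ℂ := τ ∘ₗ ι.toAlgHom.toLinearMap
  have hτ : IsFaithfulTracialState τM :=
    ⟨hτ_unital, fun x y => hτ_tracial x x.2 y y.2, fun x => (hτ_pos x x.2).1,
      fun x => (hτ_pos x x.2).2, fun x hx => Subtype.ext (hτ_faithful x x.2 hx)⟩
  have hn : IsNormalFunctional τM := fun x y hx hxy =>
    hτ_normal _ _ (fun n => (x n).2) hx y.2 fun ξ η =>
      ContinuousLinearMapWOT.tendsto_iff_forall_inner_apply_tendsto.1 hxy η ξ
  have hdense : (M.toStarSubalgebra : Set (H →L[ℂ] H)) ⊆ strongClosure (⋃ n, B n) :=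
    fun x hx => mem_strongClosure_iUnion.2 (hBd x hx)
  have hdiffuse (f) (hf : IsMinimalProjection (⊤ : StarSubalgebra ℂ M.toStarSubalgebra) f) :=
    have ⟨_, ⟨hff, hfs⟩, hf0, hfc⟩ := hf.coe_of_top
    have ⟨x, hx, hxf⟩ := diffuse f f.2 hfs hff hf0
    (hfc x hx).elim hxf
  have := finiteDimensional_comap hι D
  have := fun n => finiteDimensional_comap hι (B n)
  obtain ⟨C, hC, hCfin, hDC, hCε, u, hu, huC⟩ :=
    hτ.exists_monotone_finiteDimensional_re_map_lt (hn.isTwoNormComplete hτ) hdiffuse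
      (fun _ _ hnm _ hx => hB hnm hx) (mem_twoNormClosure_iUnion_comap hn hτ hB hBM hdense)
      (D := D.comap ι) (fun x hx y hy => Subtype.ext (hDab x hx y hy)) hε
  have hCdense := subset_strongClosure_iUnion_map hBM hdense hu huC
  refine ⟨fun n => (C n).map ι, fun _ _ hnm => StarSubalgebra.map_mono (hC hnm),
    fun n => by rintro _ ⟨x, -, rfl⟩; exact x.2, fun n => finiteDimensional_map ι (C n),
    fun n d hd => ⟨⟨d, hDM hd⟩, hDC n hd, rfl⟩,
    fun x hx => mem_strongClosure_iUnion.1 (hCdense hx), ?_⟩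
  rintro n _ ⟨q, hq, rfl⟩ hqs hqq hq0 hmin
  exact hCε n q (.of_map hι hq ⟨⟨q, hq, rfl⟩, ⟨hqq, hqs⟩, hq0, hmin⟩)
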